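/- For every n ≥ 1 and every γ ∈ ((4n+1)/(4n+2), 1], the γ-Hölder homotopy group π_{4n−1}^γ(ℍ^{2n}) is nontrivial. Concretely: there exists a map f : S^{4n−1} → ℝ^{4n+1} (S^{4n−1} the unit sphere in ℝ^{4n}) which is Lipschitz as a map into ℍ^{2n} (there is L with d_K(f(x), f(y)) ≤ L·|x−y| for all x, y ∈ S^{4n−1}), in particular γ-Hölder into ℍ^{2n}, such that there exists no map F : B̄^{4n} → ℝ^{4n+1} with F restricted to S^{4n−1} equal to f and with F γ-Hölder continuous as a map into ℍ^{2n} (i.e. d_K(F(x), F(y)) ≤ C·|x−y|^γ for some C and all x, y in the closed unit ball B̄^{4n}). -/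

import Mathlib

open Metric Set MeasureTheory Topology

/-- The index of the coordinate `x_j` in `ℝ^{2n+1}`. -/
def xI (n : ℕ) (j : Fin n) : Fin (2*n+1) := ⟨2*j.1, by have := j.2; omega⟩

/-- The index of the coordinate `y_j` in `ℝ^{2n+1}`. -/
def yI (n : ℕ) (j : Fin n) : Fin (2*n+1) := ⟨2*j.1+1, by have := j.2; omega⟩

/-- The index of the coordinate `t` in `ℝ^{2n+1}`. -/
def tI (n : ℕ) : Fin (2*n+1) := Fin.last (2*n)

/-- The Korányi metric on the Heisenberg group `ℍ^n = ℝ^{2n+1}`: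
`d_K(p,q) = (|z-z'|^4 + |t - t' + 2 ∑_j (x_j' y_j - x_j y_j')|^2)^{1/4}`. -/
noncomputable def dK (n : ℕ) (p q : EuclideanSpace ℝ (Fin (2*n+1))) : ℝ :=
  ((∑ i : Fin (2*n), (p (Fin.castSucc i) - q (Fin.castSucc i)) ^ 2) ^ 2 +
    (p (tI n) - q (tI n) +
      2 * ∑ j : Fin n, (q (xI n j) * p (yI n j) - p (xI n j) * q (yI n j))) ^ 2) ^ ((1:ℝ)/4)

/-!
In the coordinate `h = t + 2 ∑ x_j y_j` the contact form of `ℍ^N`, `N = 2n`, is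
`dh - 4 ∑ y_j dx_j`, so on a smooth horizontal map `ℝ^{2N} → ℍ^N` the form `dh` is a combination of
the `dx_j`. Pair the form `κ = h dx_1 ∧ … ∧ dx_N` with its translate `κ_s` by `s • w`: the
`s`-derivative of `κ_s ∧ κ` is then exact, so `∫ κ_s ∧ κ` does not depend on `s`. At `s = 0` it
vanishes, because the factors `dx_j` are repeated. At `s = 10` the unit ball no longer meets the
support of the other factor, so the integral depends on the boundary map only; for the boundary map
chosen here, two copies of a compactly supported profile, it is twice the square of a positive mass
(`N` being even, the two cross terms have the same sign). This contradiction is a Hopf invariant.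

A `γ`-Hölder map is mollified at scale `ε`. The covectors `dx_j` are then `O(ε^{γ-1})` and the
contact form is `O(ε^{2γ-1})`, so `∫ κ_s ∧ κ` changes by at most `O(ε^{(2N+2)γ-(2N+1)})`, which
tends to `0` exactly when `γ > (2N+1)/(2N+2) = (4n+1)/(4n+2)`.
-/

/-! ### Determinants of covectors and null Lagrangians -/

section Determinant

variable {m : Type*} [Fintype m]

/-- The continuous linear forms on the Euclidean space `ℝ^m`. -/
abbrev Covector (m : Type*) [Fintype m] : Type _ := StrongDual ℝ (EuclideanSpace ℝ m)

/-- All members of the family `v` vanish on two common coordinate axes. This persists, up to one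
axis, when one member is replaced, which is what makes boundary terms of determinants vanish. -/
def VanishOnTwoAxes [DecidableEq m] {α : Type*} (v : α → Covector m) : Prop :=
  ∃ k₁ k₂ : m, k₁ ≠ k₂ ∧
    ∀ i, v i (EuclideanSpace.single k₁ 1) = 0 ∧ v i (EuclideanSpace.single k₂ 1) = 0

variable [DecidableEq m]

/-- The determinant of the matrix whose rows are the given covectors on `ℝ^m`. -/
noncomputable def covectorDet (m : Type*) [Fintype m] [DecidableEq m] :
    Covector m [⋀^m]→L[ℝ] ℝ :=
  { (Matrix.detRowAlternating (R := ℝ) (n := m)).compLinearMap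
      (LinearMap.pi fun k => (ContinuousLinearMap.apply ℝ ℝ
        (EuclideanSpace.single k (1 : ℝ))).toLinearMap) with
    cont := by
      change Continuous fun v : m → Covector m =>
        Matrix.det (Matrix.of fun i k => v i (EuclideanSpace.single k 1))
      fun_prop }

theorem covectorDet_apply (v : m → Covector m) :
    covectorDet m v = Matrix.det (Matrix.of fun i k => v i (EuclideanSpace.single k 1)) :=
  rfl

theorem covectorDet_update_add (v : m → Covector m) (i : m) (a b : Covector m) :
    covectorDet m (Function.update v i (a + b)) =
      covectorDet m (Function.update v i a) + covectorDet m (Function.update v i b) :=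
  (covectorDet m).toMultilinearMap.map_update_add v i a b

theorem covectorDet_update_smul (v : m → Covector m) (i : m) (c : ℝ) (l : Covector m) :
    covectorDet m (Function.update v i (c • l)) = c * covectorDet m (Function.update v i l) :=
  (covectorDet m).toMultilinearMap.map_update_smul v i c l

theorem covectorDet_update_sum {α : Type*} (s : Finset α) (v : m → Covector m)
    (i : m) (c : α → ℝ) (l : α → Covector m) :
    covectorDet m (Function.update v i (∑ k ∈ s, c k • l k)) =
      ∑ k ∈ s, c k * covectorDet m (Function.update v i (l k)) := by
  simpa using (covectorDet m).toMultilinearMap.map_update_sum s i (fun k => c k • l k) v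

theorem covectorDet_update_eq_zero_of_eq (v : m → Covector m) {i j : m} (hij : i ≠ j) :
    covectorDet m (Function.update v i (v j)) = 0 :=
  (covectorDet m).map_eq_zero_of_eq _ (i := i) (j := j) (by simp [hij.symm]) hij

theorem covectorDet_update_update_swap (v : m → Covector m) {i j : m} (hij : i ≠ j)
    (a b : Covector m) :
    covectorDet m (Function.update (Function.update v i a) j b) =
      -covectorDet m (Function.update (Function.update v i b) j a) := by
  have hswap : Function.update (Function.update v i a) j b =
      Function.update (Function.update v i b) j a ∘ Equiv.swap i j := by
    funext k
    simp only [Function.comp_apply, Function.update_apply, Equiv.swap_apply_def]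
    grind
  rw [hswap]
  exact (covectorDet m).toAlternatingMap.map_swap _ hij

theorem VanishOnTwoAxes.covectorDet_update_eq_zero {v : m → Covector m}
    (h : VanishOnTwoAxes v) (i : m) (l : Covector m) :
    covectorDet m (Function.update v i l) = 0 := by
  obtain ⟨k₁, k₂, hk, hv⟩ := h
  rw [covectorDet_apply, Matrix.det_apply]
  refine Finset.sum_eq_zero fun σ _ => ?_
  by_cases h₁ : σ k₁ = i
  · have h₂ : σ k₂ ≠ i := fun h₂ => hk (σ.injective (h₁.trans h₂.symm))
    rw [Finset.prod_eq_zero (Finset.mem_univ k₂), smul_zero]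
    simpa [h₂] using (hv _).2
  · rw [Finset.prod_eq_zero (Finset.mem_univ k₁), smul_zero]
    simpa [h₁] using (hv _).1

theorem VanishOnTwoAxes.covectorDet_eq_zero {v : m → Covector m} (h : VanishOnTwoAxes v) :
    covectorDet m v = 0 := by
  obtain ⟨k, -⟩ := id h
  rw [← Function.update_eq_self k v, h.covectorDet_update_eq_zero]

theorem abs_covectorDet_le (v : m → Covector m) {A : ℝ} (h : ∀ i, ‖v i‖ ≤ A) :
    |covectorDet m v| ≤ ‖covectorDet m‖ * A ^ Fintype.card m := by
  simpa using (covectorDet m).le_opNorm_mul_prod_of_le (b := fun _ => A) h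

theorem abs_covectorDet_update_le (v : m → Covector m) (i : m) (l : Covector m) {A δ : ℝ}
    (h : ∀ i, ‖v i‖ ≤ A) (hl : ‖l‖ ≤ δ) :
    |covectorDet m (Function.update v i l)| ≤
      ‖covectorDet m‖ * (δ * A ^ (Fintype.card m - 1)) := by
  have hrows : ∀ j, ‖Function.update v i l j‖ ≤ Function.update (fun _ => A) i δ j := by
    intro j
    rcases eq_or_ne j i with rfl | hj
    · simpa using hl
    · simpa [hj] using h j
  have := (covectorDet m).le_opNorm_mul_prod_of_le hrows
  rw [Finset.prod_update_of_mem (Finset.mem_univ i)] at this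
  simpa [Finset.card_sdiff] using this

theorem Covector.eq_sum_proj (l : Covector m) :
    l = ∑ k, l (EuclideanSpace.single k 1) • EuclideanSpace.proj (𝕜 := ℝ) k := by
  ext p
  conv_lhs => rw [← (EuclideanSpace.basisFun m ℝ).sum_repr p]
  simp [map_sum, mul_comm]

theorem covectorDet_eq_sum_update_proj (v : m → Covector m) (i : m) (l : Covector m) :
    covectorDet m (Function.update v i l) = ∑ k, l (EuclideanSpace.single k 1) *
      covectorDet m (Function.update v i (EuclideanSpace.proj (𝕜 := ℝ) k)) := by
  conv_lhs => rw [l.eq_sum_proj]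
  exact covectorDet_update_sum _ _ _ _ _

theorem hasFDerivAt_covectorDet {G : Type*} [NormedAddCommGroup G] [NormedSpace ℝ G]
    {l : m → G → Covector m} {l' : m → G →L[ℝ] Covector m} {x : G}
    (h : ∀ i, HasFDerivAt (l i) (l' i) x) :
    HasFDerivAt (fun x => covectorDet m fun i => l i x)
      (∑ i, (covectorDet m).toContinuousMultilinearMap.toContinuousLinearMap (fun j => l j x) i ∘L
        l' i) x :=
  HasFDerivAt.multilinear_comp _ h

theorem sum_sum_mul_eq_zero_of_symm_of_antisymm {α : Type*} [Fintype α] {S T : α → α → ℝ}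
    (hS : ∀ k l, S k l = S l k) (hT : ∀ k l, T k l = -T l k) :
    ∑ k, ∑ l, S k l * T k l = 0 := by
  have hneg : ∑ k, ∑ l, S k l * T k l = -∑ k, ∑ l, S k l * T k l := by
    conv_lhs => rw [Finset.sum_comm]
    simp only [← Finset.sum_neg_distrib]
    exact Finset.sum_congr rfl fun k _ => Finset.sum_congr rfl fun l _ => by
      rw [hS l k, hT l k, mul_neg]
  linarith

theorem sum_covectorDet_update_update_symm_eq_zero (v : m → Covector m) {i j : m} (hij : i ≠ j)
    (B : EuclideanSpace ℝ m →L[ℝ] Covector m) (hB : ∀ p q, B p q = B q p) :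
    ∑ k, covectorDet m (Function.update (Function.update v i (EuclideanSpace.proj (𝕜 := ℝ) k)) j
      (B (EuclideanSpace.single k 1))) = 0 := by
  rw [Finset.sum_congr rfl fun k _ => covectorDet_eq_sum_update_proj _ j _]
  exact sum_sum_mul_eq_zero_of_symm_of_antisymm (fun k l => hB _ _)
    fun k l => covectorDet_update_update_swap v hij _ _

/-- The `k`-th entry of the row `i₀` of the cofactor matrix of the Jacobian matrix of `f`. -/
noncomputable def jacobianCofactor (f : m → EuclideanSpace ℝ m → ℝ) (i₀ k : m)
    (p : EuclideanSpace ℝ m) : ℝ :=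
  covectorDet m (Function.update (fun i => fderiv ℝ (f i) p) i₀ (EuclideanSpace.proj (𝕜 := ℝ) k))

theorem contDiff_jacobianCofactor {f : m → EuclideanSpace ℝ m → ℝ} (hf : ∀ i, ContDiff ℝ 2 (f i))
    (i₀ k : m) : ContDiff ℝ 1 (jacobianCofactor f i₀ k) := by
  refine (covectorDet m).toContinuousMultilinearMap.contDiff.comp (contDiff_pi.2 fun i => ?_)
  rcases eq_or_ne i i₀ with rfl | hi
  · simpa using contDiff_const
  · simpa [hi] using (hf i).fderiv_right (m := 1) (by norm_num)

theorem covectorDet_fderiv_eq_sum_mul_jacobianCofactor (f : m → EuclideanSpace ℝ m → ℝ) (i₀ : m)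
    (p : EuclideanSpace ℝ m) :
    covectorDet m (fun i => fderiv ℝ (f i) p) =
      ∑ k, fderiv ℝ (f i₀) p (EuclideanSpace.single k 1) * jacobianCofactor f i₀ k p := by
  have hexp := covectorDet_eq_sum_update_proj (fun i => fderiv ℝ (f i) p) i₀ (fderiv ℝ (f i₀) p)
  rwa [Function.update_eq_self i₀ fun i => fderiv ℝ (f i) p] at hexp

theorem fderiv_jacobianCofactor {f : m → EuclideanSpace ℝ m → ℝ} (hf : ∀ i, ContDiff ℝ 2 (f i))
    (i₀ k : m) (p v : EuclideanSpace ℝ m) :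
    fderiv ℝ (jacobianCofactor f i₀ k) p v = ∑ i ∈ Finset.univ.erase i₀,
      covectorDet m (Function.update (Function.update (fun i => fderiv ℝ (f i) p) i₀
        (EuclideanSpace.proj (𝕜 := ℝ) k)) i (fderiv ℝ (fderiv ℝ (f i)) p v)) := by
  have hrow : ∀ i, HasFDerivAt
      (fun q => Function.update (fun i => fderiv ℝ (f i) q) i₀ (EuclideanSpace.proj (𝕜 := ℝ) k) i)
      (if i = i₀ then 0 else fderiv ℝ (fderiv ℝ (f i)) p) p := by
    intro i
    split_ifs with hi
    · simpa [hi] using hasFDerivAt_const (EuclideanSpace.proj (𝕜 := ℝ) k) p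
    · have : ContDiff ℝ 1 (fderiv ℝ (f i)) := (hf i).fderiv_right (by norm_num)
      simpa [hi] using (this.differentiable (by norm_num) p).hasFDerivAt
  have hderiv := congrArg (· v) (hasFDerivAt_covectorDet hrow).fderiv
  rw [sum_apply] at hderiv
  refine hderiv.trans ?_
  rw [← Finset.add_sum_erase _ _ (Finset.mem_univ i₀), if_pos rfl, ContinuousLinearMap.comp_zero,
    zero_apply, zero_add]
  exact Finset.sum_congr rfl fun i hi => by rw [if_neg (Finset.ne_of_mem_erase hi)]; rfl

theorem sum_fderiv_jacobianCofactor_eq_zero {f : m → EuclideanSpace ℝ m → ℝ}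
    (hf : ∀ i, ContDiff ℝ 2 (f i)) (i₀ : m) (p : EuclideanSpace ℝ m) :
    ∑ k, fderiv ℝ (jacobianCofactor f i₀ k) p (EuclideanSpace.single k 1) = 0 := by
  simp_rw [fderiv_jacobianCofactor hf]
  rw [Finset.sum_comm]
  exact Finset.sum_eq_zero fun i hi => sum_covectorDet_update_update_symm_eq_zero _
    (Finset.ne_of_mem_erase hi).symm _
    ((hf i).contDiffAt.isSymmSndFDerivAt (by simp))

theorem covectorDet_fderiv_eq_sum_fderiv_mul_jacobianCofactor {f : m → EuclideanSpace ℝ m → ℝ}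
    (hf : ∀ i, ContDiff ℝ 2 (f i)) (i₀ : m) (p : EuclideanSpace ℝ m) :
    covectorDet m (fun i => fderiv ℝ (f i) p) =
      ∑ k, fderiv ℝ (fun q => f i₀ q * jacobianCofactor f i₀ k q) p
        (EuclideanSpace.single k 1) := by
  have hmul : ∀ k, fderiv ℝ (fun q => f i₀ q * jacobianCofactor f i₀ k q) p
      (EuclideanSpace.single k 1) =
      f i₀ p * fderiv ℝ (jacobianCofactor f i₀ k) p (EuclideanSpace.single k 1) +
        fderiv ℝ (f i₀) p (EuclideanSpace.single k 1) * jacobianCofactor f i₀ k p := by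
    intro k
    rw [fderiv_fun_mul ((hf i₀).differentiable (by norm_num) p)
      ((contDiff_jacobianCofactor hf i₀ k).differentiable (by norm_num) p)]
    simp [mul_comm]
  simp_rw [hmul, Finset.sum_add_distrib, ← Finset.mul_sum,
    sum_fderiv_jacobianCofactor_eq_zero hf, mul_zero, zero_add]
  exact covectorDet_fderiv_eq_sum_mul_jacobianCofactor f i₀ p

theorem integral_fderiv_eq_zero_of_hasCompactSupport {E : Type*} [NormedAddCommGroup E]
    [NormedSpace ℝ E] [FiniteDimensional ℝ E] [MeasurableSpace E] [BorelSpace E]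
    (μ : Measure E) [μ.IsAddHaarMeasure] {h : E → ℝ} (hc : ContDiff ℝ 1 h)
    (hs : HasCompactSupport h) (v : E) :
    ∫ p, fderiv ℝ h p v ∂μ = 0 := by
  have hint : Integrable (fun p => fderiv ℝ h p v) μ :=
    ((hc.continuous_fderiv (by norm_num)).clm_apply
      continuous_const).integrable_of_hasCompactSupport (hs.fderiv_apply ℝ v)
  simpa using integral_mul_fderiv_eq_neg_fderiv_mul_of_integrable (μ := μ)
    (f := fun _ : E => (1 : ℝ)) (g := h) (v := v) (by simp) (by simpa using hint)
    (by simpa using hc.continuous.integrable_of_hasCompactSupport hs)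
    (by simp) (fun x _ => hc.differentiable (by norm_num) x)

theorem integral_covectorDet_fderiv_eq_zero {f : m → EuclideanSpace ℝ m → ℝ}
    (hf : ∀ i, ContDiff ℝ 2 (f i)) (i₀ : m) {R : ℝ}
    (hR : ∀ p, R < ‖p‖ → ∀ l,
      covectorDet m (Function.update (fun i => fderiv ℝ (f i) p) i₀ l) = 0) :
    ∫ p, covectorDet m (fun i => fderiv ℝ (f i) p) = 0 := by
  have hsmooth : ∀ k, ContDiff ℝ 1 fun p => f i₀ p * jacobianCofactor f i₀ k p := fun k =>
    ((hf i₀).of_le (by norm_num)).mul (contDiff_jacobianCofactor hf i₀ k)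
  have hsupp : ∀ k, HasCompactSupport fun p => f i₀ p * jacobianCofactor f i₀ k p := by
    refine fun k => HasCompactSupport.intro (isCompact_closedBall 0 R) fun p hp => ?_
    rw [mem_closedBall_zero_iff, not_le] at hp
    simp [jacobianCofactor, hR p hp]
  simp_rw [covectorDet_fderiv_eq_sum_fderiv_mul_jacobianCofactor hf i₀]
  rw [integral_finsetSum]
  · exact Finset.sum_eq_zero fun k _ =>
      integral_fderiv_eq_zero_of_hasCompactSupport volume (hsmooth k) (hsupp k) _
  · exact fun k _ => (((hsmooth k).continuous_fderiv (by norm_num)).clm_apply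
      continuous_const).integrable_of_hasCompactSupport ((hsupp k).fderiv_apply ℝ _)

end Determinant

/-! ### Deforming the pairing of a form with its translate -/

section ContactResidual

variable {ι : Type*} [Fintype ι] [DecidableEq ι]

/-- The part of the derivative of the density of `κ_s ∧ κ` along `w` that is not a divergence:
`r` lists the differentials of the coordinates of `κ_s` and of `κ`, and `l`, `μ` are the
differentials of their coefficients `φ`, `ψ`. -/
noncomputable def contactResidual (r : ι ⊕ ι → Covector (ι ⊕ ι)) (φ ψ : ℝ) (l μ : Covector (ι ⊕ ι))
    (w : EuclideanSpace ℝ (ι ⊕ ι)) : ℝ :=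
  l w * ψ * covectorDet (ι ⊕ ι) r - ∑ i, r (Sum.inl i) w *
    covectorDet (ι ⊕ ι) (Function.update r (Sum.inl i) (ψ • l + φ • μ))

theorem covectorDet_update_inl_add_sum_inl (r : ι ⊕ ι → Covector (ι ⊕ ι)) (i : ι)
    (l : Covector (ι ⊕ ι)) (c : ι → ℝ) :
    covectorDet _ (Function.update r (Sum.inl i) (l + ∑ j, c j • r (Sum.inl j))) =
      covectorDet _ (Function.update r (Sum.inl i) l) + c i * covectorDet _ r := by
  rw [covectorDet_update_add, covectorDet_update_sum, Finset.sum_eq_single i,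
    Function.update_eq_self]
  · exact fun j _ hj => by
      rw [covectorDet_update_eq_zero_of_eq r (Sum.inl_injective.ne hj.symm), mul_zero]
  · simp

theorem covectorDet_update_inl_add_sum_inr (r : ι ⊕ ι → Covector (ι ⊕ ι)) (i : ι)
    (l : Covector (ι ⊕ ι)) (c : ι → ℝ) :
    covectorDet _ (Function.update r (Sum.inl i) (l + ∑ j, c j • r (Sum.inr j))) =
      covectorDet _ (Function.update r (Sum.inl i) l) := by
  rw [covectorDet_update_add, covectorDet_update_sum, Finset.sum_eq_zero, add_zero]
  exact fun j _ => by rw [covectorDet_update_eq_zero_of_eq r Sum.inl_ne_inr, mul_zero]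

theorem contactResidual_add_sum (r : ι ⊕ ι → Covector (ι ⊕ ι)) (φ ψ : ℝ)
    (l μ : Covector (ι ⊕ ι)) (w : EuclideanSpace ℝ (ι ⊕ ι)) (c c' : ι → ℝ) :
    contactResidual r φ ψ (l + ∑ i, c i • r (Sum.inl i)) (μ + ∑ i, c' i • r (Sum.inr i)) w =
      contactResidual r φ ψ l μ w := by
  simp only [contactResidual, covectorDet_update_add r _ (ψ • _), covectorDet_update_smul,
    covectorDet_update_inl_add_sum_inl, covectorDet_update_inl_add_sum_inr,
    add_apply, sum_apply, smul_apply, smul_eq_mul, mul_add, add_mul, Finset.sum_add_distrib,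
    Finset.sum_mul]
  have hcomm : ∑ i, r (Sum.inl i) w * (ψ * (c i * covectorDet _ r)) =
      ∑ i, c i * r (Sum.inl i) w * ψ * covectorDet _ r :=
    Finset.sum_congr rfl fun i _ => by ring
  rw [hcomm]
  ring

theorem abs_mul_covectorDet_update_inl_le {r : ι ⊕ ι → Covector (ι ⊕ ι)}
    (l : Covector (ι ⊕ ι)) (w : EuclideanSpace ℝ (ι ⊕ ι)) {A δ : ℝ}
    (hr : ∀ k, ‖r k‖ ≤ A) (hl : ‖l‖ ≤ δ) (i : ι) :
    |r (Sum.inl i) w * covectorDet _ (Function.update r (Sum.inl i) l)| ≤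
      δ * ‖w‖ * ‖covectorDet (ι ⊕ ι)‖ * A ^ Fintype.card (ι ⊕ ι) := by
  have hA : 0 ≤ A := (norm_nonneg _).trans (hr (Sum.inl i))
  have hrow : |r (Sum.inl i) w| ≤ A * ‖w‖ := (r (Sum.inl i)).le_of_opNorm_le (hr _) w
  have hpow : A ^ Fintype.card (ι ⊕ ι) = A * A ^ (Fintype.card (ι ⊕ ι) - 1) :=
    (mul_pow_sub_one (Fintype.card_pos_iff.2 ⟨Sum.inl i⟩).ne' A).symm
  calc |r (Sum.inl i) w * covectorDet _ (Function.update r (Sum.inl i) l)|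
      = |r (Sum.inl i) w| * |covectorDet _ (Function.update r (Sum.inl i) l)| := abs_mul _ _
    _ ≤ A * ‖w‖ * (‖covectorDet (ι ⊕ ι)‖ * (δ * A ^ (Fintype.card (ι ⊕ ι) - 1))) := by
        gcongr
        exact abs_covectorDet_update_le r (Sum.inl i) l hr hl
    _ = δ * ‖w‖ * ‖covectorDet (ι ⊕ ι)‖ * A ^ Fintype.card (ι ⊕ ι) := by rw [hpow]; ring

theorem abs_contactResidual_le {r : ι ⊕ ι → Covector (ι ⊕ ι)} {φ ψ : ℝ} {l μ : Covector (ι ⊕ ι)}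
    (w : EuclideanSpace ℝ (ι ⊕ ι)) {A δ M : ℝ} (hr : ∀ k, ‖r k‖ ≤ A) (hφ : |φ| ≤ M)
    (hψ : |ψ| ≤ M) (hl : ‖l‖ ≤ δ) (hμ : ‖μ‖ ≤ δ) :
    |contactResidual r φ ψ l μ w| ≤ M * δ * ‖w‖ * ‖covectorDet (ι ⊕ ι)‖ *
      A ^ Fintype.card (ι ⊕ ι) * (1 + 2 * Fintype.card ι) := by
  have hM : 0 ≤ M := (abs_nonneg _).trans hφ
  have hδ : 0 ≤ δ := (norm_nonneg _).trans hl
  set Q := ‖covectorDet (ι ⊕ ι)‖ * A ^ Fintype.card (ι ⊕ ι) with hQ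
  have hmain : |l w * ψ * covectorDet _ r| ≤ M * δ * ‖w‖ * Q := by
    rw [abs_mul, abs_mul]
    calc |l w| * |ψ| * |covectorDet _ r| ≤ (δ * ‖w‖) * M * Q := by
          gcongr
          · exact l.le_of_opNorm_le hl w
          · exact abs_covectorDet_le r hr
      _ = M * δ * ‖w‖ * Q := by ring
  have hterm : ∀ i, |r (Sum.inl i) w *
      covectorDet _ (Function.update r (Sum.inl i) (ψ • l + φ • μ))| ≤
        2 * (M * δ * ‖w‖ * Q) := by
    intro i
    have hsum : ‖ψ • l + φ • μ‖ ≤ 2 * (M * δ) := by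
      refine (norm_add_le _ _).trans ?_
      rw [norm_smul, norm_smul, two_mul]
      gcongr <;> simpa
    exact (abs_mul_covectorDet_update_inl_le _ w hr hsum i).trans_eq (by rw [hQ]; ring)
  calc |contactResidual r φ ψ l μ w|
      ≤ |l w * ψ * covectorDet _ r| + |∑ i, r (Sum.inl i) w *
          covectorDet _ (Function.update r (Sum.inl i) (ψ • l + φ • μ))| := abs_sub _ _
    _ ≤ M * δ * ‖w‖ * Q + ∑ _i : ι, 2 * (M * δ * ‖w‖ * Q) := by
        gcongr
        exact (Finset.abs_sum_le_sum_abs _ _).trans (Finset.sum_le_sum fun i _ => hterm i)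
    _ = M * δ * ‖w‖ * ‖covectorDet (ι ⊕ ι)‖ * A ^ Fintype.card (ι ⊕ ι) *
          (1 + 2 * Fintype.card ι) := by
        simp only [Finset.sum_const, Finset.card_univ, nsmul_eq_mul, hQ]
        ring

theorem abs_contactResidual_le_of_norm_sub_sum_le {r : ι ⊕ ι → Covector (ι ⊕ ι)} {φ ψ : ℝ}
    {l μ : Covector (ι ⊕ ι)} (w : EuclideanSpace ℝ (ι ⊕ ι)) {c c' : ι → ℝ} {A δ M : ℝ}
    (hr : ∀ k, ‖r k‖ ≤ A) (hφ : |φ| ≤ M) (hψ : |ψ| ≤ M)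
    (hl : ‖l - ∑ i, c i • r (Sum.inl i)‖ ≤ δ) (hμ : ‖μ - ∑ i, c' i • r (Sum.inr i)‖ ≤ δ) :
    |contactResidual r φ ψ l μ w| ≤ M * δ * ‖w‖ * ‖covectorDet (ι ⊕ ι)‖ *
      A ^ Fintype.card (ι ⊕ ι) * (1 + 2 * Fintype.card ι) := by
  have := abs_contactResidual_le w hr hφ hψ hl hμ
  rwa [← contactResidual_add_sum r φ ψ _ _ w c c', sub_add_cancel, sub_add_cancel] at this

end ContactResidual

section Deformation

theorem fderiv_fderiv_apply {E : Type*} [NormedAddCommGroup E] [NormedSpace ℝ E] {f : E → ℝ}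
    (hf : ContDiff ℝ 2 f) (w p : E) :
    fderiv ℝ (fun q => fderiv ℝ f q w) p = fderiv ℝ (fderiv ℝ f) p w := by
  have hd : DifferentiableAt ℝ (fderiv ℝ f) p :=
    (hf.fderiv_right (m := 1) (by norm_num)).differentiable (by norm_num) p
  ext v
  rw [fderiv_clm_apply hd (differentiableAt_const w)]
  simpa using (hf.contDiffAt.isSymmSndFDerivAt (by simp)) v w

theorem contDiff_fderiv_apply {E : Type*} [NormedAddCommGroup E] [NormedSpace ℝ E] {f : E → ℝ}
    (hf : ContDiff ℝ 3 f) (w : E) : ContDiff ℝ 2 fun q => fderiv ℝ f q w :=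
  (hf.fderiv_right (m := 2) (by norm_num)).clm_apply contDiff_const

theorem integrable_of_continuous_of_eq_zero {E : Type*} [NormedAddCommGroup E] [ProperSpace E]
    [MeasurableSpace E] [BorelSpace E] {μ : Measure E} [IsFiniteMeasureOnCompacts μ] {f : E → ℝ}
    (hf : Continuous f) {R : ℝ} (hR : ∀ p, R < ‖p‖ → f p = 0) : Integrable f μ :=
  hf.integrable_of_hasCompactSupport
    (HasCompactSupport.intro (isCompact_closedBall 0 R) fun p hp => hR p (by simpa using hp))

theorem hasDerivAt_integral_of_continuous {E : Type*} [NormedAddCommGroup E] [ProperSpace E]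
    [MeasurableSpace E] [BorelSpace E] {μ : Measure E} [IsFiniteMeasureOnCompacts μ]
    {G G' : ℝ → E → ℝ} (hG : Continuous fun z : ℝ × E => G z.1 z.2)
    (hG' : Continuous fun z : ℝ × E => G' z.1 z.2)
    (hderiv : ∀ s p, HasDerivAt (fun s => G s p) (G' s p) s) {a b R : ℝ}
    (hR : ∀ s ∈ Ioo a b, ∀ p, R < ‖p‖ → G s p = 0) {s : ℝ} (hs : s ∈ Ioo a b) :
    HasDerivAt (fun s => ∫ p, G s p ∂μ) (∫ p, G' s p ∂μ) s := by
  have hR' : ∀ s ∈ Ioo a b, ∀ p, R < ‖p‖ → G' s p = 0 := fun s hs p hp =>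
    (hderiv s p).unique ((hasDerivAt_const s 0).congr_of_eventuallyEq
      (Filter.eventually_of_mem (Ioo_mem_nhds hs.1 hs.2) fun s hs => hR s hs p hp))
  have hslice : ∀ s : ℝ, Continuous fun p : E => (s, p) := fun s => by fun_prop
  obtain ⟨K, hK⟩ := ((isCompact_Icc (a := a) (b := b)).prod
    (isCompact_closedBall (0 : E) R)).exists_bound_of_continuousOn hG'.continuousOn
  refine (hasDerivAt_integral_of_dominated_loc_of_deriv_le (s := Ioo a b)
    (bound := (closedBall 0 R).indicator fun _ => K) (Ioo_mem_nhds hs.1 hs.2)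
    (Filter.Eventually.of_forall fun s => (hG.comp (hslice s)).aestronglyMeasurable)
    (integrable_of_continuous_of_eq_zero (hG.comp (hslice s)) (hR s hs))
    (hG'.comp (hslice s)).aestronglyMeasurable
    (Filter.Eventually.of_forall fun p s hs => ?_) ?_
    (Filter.Eventually.of_forall fun p s _ => hderiv s p)).2
  · by_cases hp : p ∈ closedBall (0 : E) R
    · rw [indicator_of_mem hp]
      exact hK (s, p) ⟨Ioo_subset_Icc_self hs, hp⟩
    · rw [indicator_of_notMem hp, hR' s hs p (by simpa using hp), norm_zero]
  · exact (integrable_indicator_iff measurableSet_closedBall).2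
      (integrableOn_const (isCompact_closedBall _ _).measure_lt_top.ne)

variable {ι : Type*} [Fintype ι]

/-- The differentials at `p` of the translates by `s • w` of the functions `x i`, followed by those
of the functions themselves. -/
noncomputable def gradPair (x : ι → EuclideanSpace ℝ (ι ⊕ ι) → ℝ) (w : EuclideanSpace ℝ (ι ⊕ ι))
    (s : ℝ) (p : EuclideanSpace ℝ (ι ⊕ ι)) : ι ⊕ ι → Covector (ι ⊕ ι) :=
  Sum.elim (fun i => fderiv ℝ (x i) (p + s • w)) (fun i => fderiv ℝ (x i) p)

/-- The coefficient of the `i`-th term in the contraction of `κ_s` with `w`, multiplied by the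
coefficient of `κ`. -/
noncomputable def pairingFlux (x : ι → EuclideanSpace ℝ (ι ⊕ ι) → ℝ)
    (ψ : EuclideanSpace ℝ (ι ⊕ ι) → ℝ) (w : EuclideanSpace ℝ (ι ⊕ ι)) (s : ℝ) (i : ι)
    (p : EuclideanSpace ℝ (ι ⊕ ι)) : ℝ :=
  ψ (p + s • w) * ψ p * fderiv ℝ (x i) (p + s • w) w

variable {x : ι → EuclideanSpace ℝ (ι ⊕ ι) → ℝ} {ψ : EuclideanSpace ℝ (ι ⊕ ι) → ℝ}
  (w : EuclideanSpace ℝ (ι ⊕ ι))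

theorem continuous_gradPair (hx : ∀ i, ContDiff ℝ 1 (x i)) :
    Continuous fun z : ℝ × EuclideanSpace ℝ (ι ⊕ ι) => gradPair x w z.1 z.2 := by
  have hfx : ∀ i, Continuous (fderiv ℝ (x i)) := fun i => (hx i).continuous_fderiv (by norm_num)
  refine continuous_pi fun k => ?_
  rcases k with i | i
  · exact (hfx i).comp (by fun_prop)
  · exact (hfx i).comp continuous_snd

theorem contDiff_pairingFlux (hx : ∀ i, ContDiff ℝ 3 (x i)) (hψ : ContDiff ℝ 2 ψ) (s : ℝ) (i : ι) :
    ContDiff ℝ 2 (pairingFlux x ψ w s i) := by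
  have hshift : ContDiff ℝ 2 fun q : EuclideanSpace ℝ (ι ⊕ ι) => q + s • w := by fun_prop
  exact ((hψ.comp hshift).mul hψ).mul ((contDiff_fderiv_apply (hx i) w).comp hshift)

theorem fderiv_pairingFlux (hx : ∀ i, ContDiff ℝ 3 (x i)) (hψ : ContDiff ℝ 2 ψ) (s : ℝ) (i : ι)
    (p : EuclideanSpace ℝ (ι ⊕ ι)) :
    fderiv ℝ (pairingFlux x ψ w s i) p =
      (ψ (p + s • w) * ψ p) • fderiv ℝ (fun q => fderiv ℝ (x i) q w) (p + s • w) +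
        fderiv ℝ (x i) (p + s • w) w •
          (ψ p • fderiv ℝ ψ (p + s • w) + ψ (p + s • w) • fderiv ℝ ψ p) := by
  have hψs : HasFDerivAt (fun q => ψ (q + s • w)) (fderiv ℝ ψ (p + s • w)) p :=
    (hasFDerivAt_comp_add_right (s • w)).2 (hψ.differentiable (by norm_num) _).hasFDerivAt
  have hψ0 : HasFDerivAt ψ (fderiv ℝ ψ p) p := (hψ.differentiable (by norm_num) _).hasFDerivAt
  have hxs : HasFDerivAt (fun q => fderiv ℝ (x i) (q + s • w) w)
      (fderiv ℝ (fun q => fderiv ℝ (x i) q w) (p + s • w)) p :=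
    (hasFDerivAt_comp_add_right (f := fun q => fderiv ℝ (x i) q w) (s • w)).2
      ((contDiff_fderiv_apply (hx i) w).differentiable (by norm_num) _).hasFDerivAt
  rw [show fderiv ℝ (pairingFlux x ψ w s i) p = _ from ((hψs.mul hψ0).mul hxs).fderiv]
  congr 2
  exact add_comm _ _

variable [DecidableEq ι]

/-- The density of `κ_s ∧ κ`, where `κ = ψ dx₁ ∧ ⋯ ∧ dx_N` and `κ_s` is the translate of `κ` by
`s • w`. -/
noncomputable def pairingDensity (x : ι → EuclideanSpace ℝ (ι ⊕ ι) → ℝ)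
    (ψ : EuclideanSpace ℝ (ι ⊕ ι) → ℝ) (w : EuclideanSpace ℝ (ι ⊕ ι)) (s : ℝ)
    (p : EuclideanSpace ℝ (ι ⊕ ι)) : ℝ :=
  ψ (p + s • w) * ψ p * covectorDet (ι ⊕ ι) (gradPair x w s p)

/-- The derivative of `pairingDensity` in the translation parameter. -/
noncomputable def pairingDensityDeriv (x : ι → EuclideanSpace ℝ (ι ⊕ ι) → ℝ)
    (ψ : EuclideanSpace ℝ (ι ⊕ ι) → ℝ) (w : EuclideanSpace ℝ (ι ⊕ ι)) (s : ℝ)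
    (p : EuclideanSpace ℝ (ι ⊕ ι)) : ℝ :=
  fderiv ℝ ψ (p + s • w) w * ψ p * covectorDet (ι ⊕ ι) (gradPair x w s p) +
    ψ (p + s • w) * ψ p * ∑ i, covectorDet (ι ⊕ ι) (Function.update (gradPair x w s p) (Sum.inl i)
      (fderiv ℝ (fun q => fderiv ℝ (x i) q w) (p + s • w)))

theorem pairingDensity_zero [Nonempty ι] (x : ι → EuclideanSpace ℝ (ι ⊕ ι) → ℝ)
    (ψ : EuclideanSpace ℝ (ι ⊕ ι) → ℝ) (w p : EuclideanSpace ℝ (ι ⊕ ι)) :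
    pairingDensity x ψ w 0 p = 0 := by
  obtain ⟨i⟩ := ‹Nonempty ι›
  have hrows : covectorDet (ι ⊕ ι) (gradPair x w 0 p) = 0 :=
    (covectorDet (ι ⊕ ι)).map_eq_zero_of_eq _ (i := Sum.inl i) (j := Sum.inr i)
      (by simp [gradPair]) Sum.inl_ne_inr
  rw [pairingDensity, hrows, mul_zero]

theorem continuous_pairingDensity (hx : ∀ i, ContDiff ℝ 1 (x i)) (hψ : Continuous ψ) :
    Continuous fun z : ℝ × EuclideanSpace ℝ (ι ⊕ ι) => pairingDensity x ψ w z.1 z.2 :=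
  ((hψ.comp (by fun_prop)).mul (hψ.comp continuous_snd)).mul
    ((covectorDet (ι ⊕ ι)).cont.comp (continuous_gradPair w hx))

theorem continuous_pairingDensityDeriv (hx : ∀ i, ContDiff ℝ 3 (x i)) (hψ : ContDiff ℝ 2 ψ) :
    Continuous fun z : ℝ × EuclideanSpace ℝ (ι ⊕ ι) => pairingDensityDeriv x ψ w z.1 z.2 := by
  have hrow := continuous_gradPair w fun i => (hx i).of_le (by norm_num)
  have hshift : Continuous fun z : ℝ × EuclideanSpace ℝ (ι ⊕ ι) => z.2 + z.1 • w := by fun_prop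
  have hfψ : Continuous (fderiv ℝ ψ) := hψ.continuous_fderiv (by norm_num)
  have hψψ : Continuous fun z : ℝ × EuclideanSpace ℝ (ι ⊕ ι) => ψ (z.2 + z.1 • w) * ψ z.2 :=
    (hψ.continuous.comp hshift).mul (hψ.continuous.comp continuous_snd)
  refine ((((hfψ.comp hshift).clm_apply continuous_const).mul (hψ.continuous.comp
    continuous_snd)).mul ((covectorDet (ι ⊕ ι)).cont.comp hrow)).add (hψψ.mul
      (continuous_finsetSum _ fun i _ => (covectorDet (ι ⊕ ι)).cont.comp (hrow.update _ ?_)))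
  exact ((contDiff_fderiv_apply (hx i) w).continuous_fderiv (by norm_num)).comp hshift

theorem hasDerivAt_pairingDensity (hx : ∀ i, ContDiff ℝ 3 (x i)) (hψ : ContDiff ℝ 2 ψ)
    (s : ℝ) (p : EuclideanSpace ℝ (ι ⊕ ι)) :
    HasDerivAt (fun s => pairingDensity x ψ w s p) (pairingDensityDeriv x ψ w s p) s := by
  have hline : HasDerivAt (fun s : ℝ => p + s • w) w s := by
    simpa using ((hasDerivAt_id s).smul_const w).const_add p
  have hψ' : HasDerivAt (fun s : ℝ => ψ (p + s • w)) (fderiv ℝ ψ (p + s • w) w) s :=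
    (hψ.differentiable (by norm_num) _).hasFDerivAt.comp_hasDerivAt s hline
  have hrow : ∀ k, HasFDerivAt (fun s => gradPair x w s p k)
      (ContinuousLinearMap.toSpanSingleton ℝ (Sum.elim
        (fun i => fderiv ℝ (fun q => fderiv ℝ (x i) q w) (p + s • w)) (fun _ => 0) k)) s := by
    rintro (i | i)
    · have h2 : ContDiff ℝ 2 (x i) := (hx i).of_le (by norm_num)
      have hd : DifferentiableAt ℝ (fderiv ℝ (x i)) (p + s • w) :=
        (h2.fderiv_right (m := 1) (by norm_num)).differentiable (by norm_num) _
      simp only [gradPair, Sum.elim_inl, fderiv_fderiv_apply h2]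
      exact (hd.hasFDerivAt.comp_hasDerivAt s hline).hasFDerivAt
    · simpa [gradPair] using hasFDerivAt_const (fderiv ℝ (x i) p) s
  have hdet : HasDerivAt (fun s => covectorDet (ι ⊕ ι) (gradPair x w s p))
      (∑ i, covectorDet (ι ⊕ ι) (Function.update (gradPair x w s p) (Sum.inl i)
        (fderiv ℝ (fun q => fderiv ℝ (x i) q w) (p + s • w)))) s := by
    convert (hasFDerivAt_covectorDet hrow).hasDerivAt using 1
    simp [Fintype.sum_sum_type]
  exact (hψ'.mul_const (ψ p)).mul hdet

theorem pairingDensityDeriv_eq (hx : ∀ i, ContDiff ℝ 3 (x i)) (hψ : ContDiff ℝ 2 ψ) (s : ℝ)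
    (p : EuclideanSpace ℝ (ι ⊕ ι)) :
    pairingDensityDeriv x ψ w s p =
      contactResidual (gradPair x w s p) (ψ (p + s • w)) (ψ p) (fderiv ℝ ψ (p + s • w))
        (fderiv ℝ ψ p) w +
      ∑ i, covectorDet (ι ⊕ ι) (Function.update (gradPair x w s p) (Sum.inl i)
        (fderiv ℝ (pairingFlux x ψ w s i) p)) := by
  simp_rw [fderiv_pairingFlux w hx hψ s _ p, covectorDet_update_add (gradPair x w s p),
    covectorDet_update_smul (gradPair x w s p), Finset.sum_add_distrib, ← Finset.mul_sum]
  simp only [pairingDensityDeriv, contactResidual, gradPair, Sum.elim_inl,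
    covectorDet_update_add, covectorDet_update_smul]
  ring

variable {w} {s R : ℝ}

theorem integral_covectorDet_update_fderiv_pairingFlux (hx : ∀ i, ContDiff ℝ 3 (x i))
    (hψ : ContDiff ℝ 2 ψ) (hR : ∀ p, R < ‖p‖ → VanishOnTwoAxes (gradPair x w s p)) (i : ι) :
    ∫ p, covectorDet (ι ⊕ ι) (Function.update (gradPair x w s p) (Sum.inl i)
      (fderiv ℝ (pairingFlux x ψ w s i) p)) = 0 := by
  have hshift : ContDiff ℝ 2 fun q : EuclideanSpace ℝ (ι ⊕ ι) => q + s • w := by fun_prop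
  have hx2 : ∀ i, ContDiff ℝ 2 (x i) := fun i => (hx i).of_le (by norm_num)
  set f : ι ⊕ ι → EuclideanSpace ℝ (ι ⊕ ι) → ℝ := Function.update
    (Sum.elim (fun i q => x i (q + s • w)) x) (Sum.inl i) (pairingFlux x ψ w s i) with hf
  have hsmooth : ∀ k, ContDiff ℝ 2 (f k) := by
    intro k
    rcases eq_or_ne k (Sum.inl i) with rfl | hk
    · simpa only [hf, Function.update_self] using contDiff_pairingFlux w hx hψ s i
    · simp only [hf, Function.update_of_ne hk]
      rcases k with j | j
      · exact (hx2 j).comp hshift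
      · exact hx2 j
  have hgrad : ∀ p, (fun k => fderiv ℝ (f k) p) =
      Function.update (gradPair x w s p) (Sum.inl i) (fderiv ℝ (pairingFlux x ψ w s i) p) := by
    intro p
    funext k
    rcases eq_or_ne k (Sum.inl i) with rfl | hk
    · simp only [hf, Function.update_self]
    · simp only [hf, Function.update_of_ne hk]
      rcases k with j | j
      · simp [gradPair, fderiv_comp_add_right]
      · simp [gradPair]
  simp_rw [← hgrad]
  refine integral_covectorDet_fderiv_eq_zero hsmooth (Sum.inl i) (R := R) fun p hp l => ?_
  rw [hgrad p, Function.update_idem, (hR p hp).covectorDet_update_eq_zero]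

theorem abs_integral_pairingDensityDeriv_le (hx : ∀ i, ContDiff ℝ 3 (x i)) (hψ : ContDiff ℝ 2 ψ)
    {y : ι → EuclideanSpace ℝ (ι ⊕ ι) → ℝ} {A δ M : ℝ}
    (hR : ∀ p, R < ‖p‖ → VanishOnTwoAxes (gradPair x w s p))
    (hA : ∀ i p, ‖fderiv ℝ (x i) p‖ ≤ A) (hM : ∀ p, |ψ p| ≤ M)
    (hδ : ∀ p, ‖fderiv ℝ ψ p - ∑ i, y i p • fderiv ℝ (x i) p‖ ≤ δ) :
    |∫ p, pairingDensityDeriv x ψ w s p| ≤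
      M * δ * ‖w‖ * ‖covectorDet (ι ⊕ ι)‖ * A ^ Fintype.card (ι ⊕ ι) *
        (1 + 2 * Fintype.card ι) *
          (volume : Measure (EuclideanSpace ℝ (ι ⊕ ι))).real (closedBall 0 R) := by
  have hcont : Continuous fun p => pairingDensityDeriv x ψ w s p :=
    (continuous_pairingDensityDeriv w hx hψ).comp (by fun_prop : Continuous fun p => (s, p))
  have hrow : Continuous fun p => gradPair x w s p :=
    (continuous_gradPair w fun i => (hx i).of_le (by norm_num)).comp
      (by fun_prop : Continuous fun p => (s, p))
  have hderiv0 : ∀ p, R < ‖p‖ → pairingDensityDeriv x ψ w s p = 0 := fun p hp => by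
    simp [pairingDensityDeriv, (hR p hp).covectorDet_eq_zero,
      (hR p hp).covectorDet_update_eq_zero]
  have hfluxint : ∀ i, Integrable fun p => covectorDet (ι ⊕ ι)
      (Function.update (gradPair x w s p) (Sum.inl i) (fderiv ℝ (pairingFlux x ψ w s i) p)) :=
    fun i => integrable_of_continuous_of_eq_zero
      ((covectorDet (ι ⊕ ι)).cont.comp (hrow.update _
        ((contDiff_pairingFlux w hx hψ s i).continuous_fderiv (by norm_num))))
      fun p hp => (hR p hp).covectorDet_update_eq_zero _ _
  have hsub : ∫ p, pairingDensityDeriv x ψ w s p =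
      ∫ p, (pairingDensityDeriv x ψ w s p - ∑ i, covectorDet (ι ⊕ ι)
        (Function.update (gradPair x w s p) (Sum.inl i) (fderiv ℝ (pairingFlux x ψ w s i) p))) := by
    rw [integral_sub (integrable_of_continuous_of_eq_zero hcont hderiv0)
      (integrable_finsetSum _ fun i _ => hfluxint i), integral_finsetSum _ fun i _ => hfluxint i,
      Finset.sum_eq_zero fun i _ => integral_covectorDet_update_fderiv_pairingFlux hx hψ hR i,
      sub_zero]
  rw [hsub, ← setIntegral_eq_integral_of_forall_compl_eq_zero (s := closedBall 0 R)
    fun p hp => ?_, ← Real.norm_eq_abs]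
  · refine norm_setIntegral_le_of_norm_le_const (isCompact_closedBall _ _).measure_lt_top
      fun p _ => ?_
    rw [pairingDensityDeriv_eq w hx hψ, add_sub_cancel_right]
    exact abs_contactResidual_le_of_norm_sub_sum_le w (by rintro (i | i) <;> exact hA i _)
      (hM _) (hM _) (hδ (p + s • w)) (hδ p)
  · have hp' : R < ‖p‖ := by simpa using hp
    simp [hderiv0 p hp', (hR p hp').covectorDet_update_eq_zero]

theorem abs_integral_pairingDensity_sub_le (hx : ∀ i, ContDiff ℝ 3 (x i)) (hψ : ContDiff ℝ 2 ψ)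
    {S a b A δ M : ℝ} (hS : 0 ≤ S) (ha : a < 0) (hb : S < b)
    {y : ι → EuclideanSpace ℝ (ι ⊕ ι) → ℝ}
    (hR : ∀ s ∈ Ioo a b, ∀ p, R < ‖p‖ → VanishOnTwoAxes (gradPair x w s p))
    (hA : ∀ i p, ‖fderiv ℝ (x i) p‖ ≤ A) (hM : ∀ p, |ψ p| ≤ M)
    (hδ : ∀ p, ‖fderiv ℝ ψ p - ∑ i, y i p • fderiv ℝ (x i) p‖ ≤ δ) :
    |(∫ p, pairingDensity x ψ w S p) - ∫ p, pairingDensity x ψ w 0 p| ≤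
      M * δ * ‖w‖ * ‖covectorDet (ι ⊕ ι)‖ * A ^ Fintype.card (ι ⊕ ι) *
        (1 + 2 * Fintype.card ι) *
          (volume : Measure (EuclideanSpace ℝ (ι ⊕ ι))).real (closedBall 0 R) * S := by
  have hmem : ∀ s ∈ Icc 0 S, s ∈ Ioo a b := fun s hs => ⟨ha.trans_le hs.1, hs.2.trans_lt hb⟩
  have hderiv : ∀ s ∈ Icc 0 S, HasDerivAt (fun s => ∫ p, pairingDensity x ψ w s p)
      (∫ p, pairingDensityDeriv x ψ w s p) s := fun s hs =>
    hasDerivAt_integral_of_continuous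
      (continuous_pairingDensity w (fun i => (hx i).of_le (by norm_num)) hψ.continuous)
      (continuous_pairingDensityDeriv w hx hψ) (hasDerivAt_pairingDensity w hx hψ)
      (fun s hs p hp => by rw [pairingDensity, (hR s hs p hp).covectorDet_eq_zero, mul_zero])
      (hmem s hs)
  simpa using norm_image_sub_le_of_norm_deriv_le_segment' (a := 0) (b := S)
    (fun s hs => (hderiv s hs).hasDerivWithinAt)
    (fun s hs => abs_integral_pairingDensityDeriv_le hx hψ
      (hR s (hmem s (Ico_subset_Icc_self hs))) hA hM hδ) S ⟨hS, le_rfl⟩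

end Deformation

/-! ### Mollification -/

section Mollification

variable {E : Type*} [NormedAddCommGroup E] [NormedSpace ℝ E] [FiniteDimensional ℝ E]
  [MeasureSpace E]

/-- A smooth probability density supported in the unit ball. -/
noncomputable def unitKernel (E : Type*) [NormedAddCommGroup E] [NormedSpace ℝ E]
    [FiniteDimensional ℝ E] [MeasureSpace E] : E → ℝ :=
  (ContDiffBump.mk (c := (0 : E)) (1 / 2) 1 (by norm_num) (by norm_num)).normed volume

/-- The kernel `unitKernel` rescaled to the ball of radius `ε`. -/
noncomputable def mollKernel (ε : ℝ) (z : E) : ℝ :=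
  (ε ^ Module.finrank ℝ E)⁻¹ * unitKernel E (ε⁻¹ • z)

/-- The mollification of a function at scale `ε`. -/
noncomputable def mollify (ε : ℝ) (h : E → ℝ) : E → ℝ :=
  convolution (mollKernel ε) h (ContinuousLinearMap.mul ℝ ℝ) volume

/-- The total variation of the unit kernel, which governs the gradients of mollifications. -/
noncomputable def kernelVariation (E : Type*) [NormedAddCommGroup E] [NormedSpace ℝ E]
    [FiniteDimensional ℝ E] [MeasureSpace E] : ℝ :=
  ∫ z, ‖fderiv ℝ (unitKernel E) z‖

theorem kernelVariation_nonneg : 0 ≤ kernelVariation E :=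
  integral_nonneg fun _ => norm_nonneg _

theorem contDiff_unitKernel {n : ℕ∞} : ContDiff ℝ n (unitKernel E) :=
  ContDiffBump.contDiff_normed _

theorem unitKernel_nonneg (z : E) : 0 ≤ unitKernel E z :=
  ContDiffBump.nonneg_normed _ _

theorem contDiff_mollKernel (ε : ℝ) {n : ℕ∞} : ContDiff ℝ n (mollKernel ε : E → ℝ) :=
  contDiff_const.mul (contDiff_unitKernel.comp (contDiff_const_smul _))

theorem continuous_mollKernel (ε : ℝ) : Continuous (mollKernel ε : E → ℝ) :=
  (contDiff_mollKernel ε (n := 0)).continuous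

theorem fderiv_mollKernel (ε : ℝ) (z : E) :
    fderiv ℝ (mollKernel ε) z =
      ((ε ^ Module.finrank ℝ E)⁻¹ * ε⁻¹) • fderiv ℝ (unitKernel E) (ε⁻¹ • z) := by
  have hscale : HasFDerivAt (fun z : E => ε⁻¹ • z) (ε⁻¹ • ContinuousLinearMap.id ℝ E) z :=
    (hasFDerivAt_id z).const_smul ε⁻¹
  have hunit : HasFDerivAt (unitKernel E) (fderiv ℝ (unitKernel E) (ε⁻¹ • z)) (ε⁻¹ • z) :=
    ((contDiff_unitKernel (n := 1)).differentiable (by norm_num) _).hasFDerivAt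
  have hmoll : HasFDerivAt (mollKernel ε) _ z :=
    (hunit.comp z hscale).const_mul (ε ^ Module.finrank ℝ E)⁻¹
  rw [hmoll.fderiv, ContinuousLinearMap.comp_smul, ContinuousLinearMap.comp_id, smul_smul]

theorem mollify_apply (ε : ℝ) (h : E → ℝ) (p : E) :
    mollify ε h p = ∫ z, mollKernel ε z * h (p - z) := rfl

theorem mollKernel_nonneg {ε : ℝ} (hε : 0 < ε) (z : E) : 0 ≤ mollKernel ε z :=
  mul_nonneg (by positivity) (unitKernel_nonneg _)

variable [BorelSpace E] [(volume : Measure E).IsAddHaarMeasure]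

theorem unitKernel_eq_zero {z : E} (hz : 1 < ‖z‖) : unitKernel E z = 0 := by
  have : z ∉ Function.support (unitKernel E) := by
    rw [unitKernel, ContDiffBump.support_normed_eq]
    simpa using hz.le
  simpa using this

theorem integral_unitKernel : ∫ z, unitKernel E z = 1 :=
  ContDiffBump.integral_normed _

variable {ε δ : ℝ} (hε : 0 < ε)
include hε

theorem mollKernel_eq_zero {z : E} (hz : ε < ‖z‖) : mollKernel ε z = 0 := by
  rw [mollKernel, unitKernel_eq_zero, mul_zero]
  rw [norm_smul, norm_inv, Real.norm_of_nonneg hε.le, ← div_eq_inv_mul, lt_div_iff₀ hε]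
  simpa using hz

theorem hasCompactSupport_mollKernel : HasCompactSupport (mollKernel ε : E → ℝ) :=
  HasCompactSupport.intro (isCompact_closedBall 0 ε) fun z hz =>
    mollKernel_eq_zero hε (by simpa using hz)

theorem fderiv_mollKernel_eq_zero {z : E} (hz : ε < ‖z‖) : fderiv ℝ (mollKernel ε) z = 0 := by
  have hzero : (mollKernel ε : E → ℝ) =ᶠ[𝓝 z] fun _ => 0 := by
    filter_upwards [(isOpen_lt continuous_const continuous_norm).mem_nhds hz] with z' hz'
    exact mollKernel_eq_zero hε hz'
  rw [hzero.fderiv_eq, fderiv_const_apply]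

theorem integral_mollKernel : ∫ z : E, mollKernel ε z = 1 := by
  simp only [mollKernel]
  rw [integral_const_mul, Measure.integral_comp_inv_smul_of_nonneg _ _ hε.le, integral_unitKernel,
    smul_eq_mul, mul_one, inv_mul_cancel₀ (by positivity)]

theorem integral_norm_fderiv_mollKernel :
    ∫ z : E, ‖fderiv ℝ (mollKernel ε) z‖ = kernelVariation E / ε := by
  have hc : 0 ≤ (ε ^ Module.finrank ℝ E)⁻¹ * ε⁻¹ := by positivity
  simp_rw [fderiv_mollKernel, norm_smul, Real.norm_of_nonneg hc]
  rw [integral_const_mul,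
    Measure.integral_comp_inv_smul_of_nonneg _ (fun z => ‖fderiv ℝ (unitKernel E) z‖) hε.le,
    smul_eq_mul, kernelVariation]
  field_simp

theorem integrable_mollKernel_mul {h : E → ℝ} (hh : Continuous h) :
    Integrable fun z => mollKernel ε z * h z :=
  ((continuous_mollKernel ε).mul hh).integrable_of_hasCompactSupport
    (hasCompactSupport_mollKernel hε).mul_right

theorem contDiff_mollify {h : E → ℝ} (hh : Continuous h) {n : ℕ∞} :
    ContDiff ℝ n (mollify ε h) :=
  (hasCompactSupport_mollKernel hε).contDiff_convolution_left _ (contDiff_mollKernel ε)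
    hh.locallyIntegrable

theorem differentiable_mollify {h : E → ℝ} (hh : Continuous h) : Differentiable ℝ (mollify ε h) :=
  (contDiff_mollify hε hh (n := 1)).differentiable (by norm_num)

theorem mollify_congr {h h' : E → ℝ} {p : E} (heq : ∀ q, ‖q - p‖ ≤ ε → h q = h' q) :
    mollify ε h p = mollify ε h' p := by
  simp only [mollify_apply]
  congr 1 with z
  rcases lt_or_ge ε ‖z‖ with hz | hz
  · rw [mollKernel_eq_zero hε hz, zero_mul, zero_mul]
  · rw [heq (p - z) (by simpa using hz)]

theorem mollify_eventuallyEq {r : ℝ} (hr : ε < r) {h h' : E → ℝ} {p : E}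
    (heq : ∀ q, ‖q - p‖ < r → h q = h' q) : mollify ε h =ᶠ[𝓝 p] mollify ε h' := by
  filter_upwards [ball_mem_nhds p (sub_pos.2 hr)] with p' hp'
  refine mollify_congr hε fun q hq => heq q ?_
  rw [mem_ball, dist_eq_norm] at hp'
  linarith [norm_sub_le_norm_sub_add_norm_sub q p' p]

theorem mollify_const (c : ℝ) (p : E) : mollify ε (fun _ => c) p = c := by
  rw [mollify_apply, integral_mul_const, integral_mollKernel hε, one_mul]

theorem mollify_sub {h h' : E → ℝ} (hh : Continuous h) (hh' : Continuous h') (p : E) :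
    mollify ε (fun q => h q - h' q) p = mollify ε h p - mollify ε h' p := by
  simp only [mollify_apply, mul_sub]
  exact integral_sub (integrable_mollKernel_mul hε (by fun_prop))
    (integrable_mollKernel_mul hε (by fun_prop))

theorem mollify_sum {ι : Type*} [Fintype ι] (c : ι → ℝ) {h : ι → E → ℝ}
    (hh : ∀ i, Continuous (h i)) (p : E) :
    mollify ε (fun q => ∑ i, c i * h i q) p = ∑ i, c i * mollify ε (h i) p := by
  simp only [mollify_apply, Finset.mul_sum, ← integral_const_mul]
  rw [integral_finsetSum _ fun i _ => integrable_mollKernel_mul hε (by fun_prop)]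
  exact Finset.sum_congr rfl fun i _ => by congr 1 with z; ring

theorem abs_mollify_le {h : E → ℝ} {p : E} (hδ : ∀ q, ‖q - p‖ ≤ ε → |h q| ≤ δ) :
    |mollify ε h p| ≤ δ := by
  have hint : Integrable fun z : E => mollKernel ε z * δ :=
    integrable_mollKernel_mul hε continuous_const
  calc |mollify ε h p| ≤ ∫ z : E, mollKernel ε z * δ := by
        rw [mollify_apply, ← Real.norm_eq_abs]
        refine norm_integral_le_of_norm_le hint (Filter.Eventually.of_forall fun z => ?_)
        rw [norm_mul, Real.norm_of_nonneg (mollKernel_nonneg hε z)]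
        rcases lt_or_ge ε ‖z‖ with hz | hz
        · rw [mollKernel_eq_zero hε hz, zero_mul, zero_mul]
        · exact mul_le_mul_of_nonneg_left (hδ (p - z) (by simpa using hz)) (mollKernel_nonneg hε z)
    _ = δ := by rw [integral_mul_const, integral_mollKernel hε, one_mul]

theorem norm_fderiv_mollify_le {h : E → ℝ} (hh : Continuous h) {p : E}
    (hδ : ∀ q, ‖q - p‖ ≤ ε → |h q| ≤ δ) :
    ‖fderiv ℝ (mollify ε h) p‖ ≤ kernelVariation E / ε * δ := by
  have hd := (hasCompactSupport_mollKernel (E := E) hε).hasFDerivAt_convolution_left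
    (ContinuousLinearMap.mul ℝ ℝ) (contDiff_mollKernel ε (n := 1))
    (hh.locallyIntegrable (μ := volume)) p
  have hint : Integrable fun z : E => ‖fderiv ℝ (mollKernel ε) z‖ :=
    (((contDiff_mollKernel ε (n := 1)).continuous_fderiv
      (by norm_num)).integrable_of_hasCompactSupport
      ((hasCompactSupport_mollKernel hε).fderiv ℝ)).norm
  rw [mollify, hd.fderiv, convolution_def, ← integral_norm_fderiv_mollKernel hε,
    ← integral_mul_const]
  refine norm_integral_le_of_norm_le (hint.mul_const δ) (Filter.Eventually.of_forall fun z => ?_)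
  have hprecomp : (ContinuousLinearMap.mul ℝ ℝ).precompL E (fderiv ℝ (mollKernel ε) z)
      (h (p - z)) = h (p - z) • fderiv ℝ (mollKernel ε) z := by
    ext v
    simp [ContinuousLinearMap.precompL_apply, mul_comm]
  rw [hprecomp, norm_smul, mul_comm]
  rcases lt_or_ge ε ‖z‖ with hz | hz
  · simp [fderiv_mollKernel_eq_zero hε hz]
  · exact mul_le_mul_of_nonneg_left (hδ (p - z) (by simpa using hz)) (norm_nonneg _)

theorem norm_fderiv_mollify_sub_fderiv_mollify_le {h h' : E → ℝ} (hh : Continuous h)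
    (hh' : Continuous h') {p : E} (hδ : ∀ q, ‖q - p‖ ≤ ε → |h q - h' q - (h p - h' p)| ≤ δ) :
    ‖fderiv ℝ (mollify ε h) p - fderiv ℝ (mollify ε h') p‖ ≤ kernelVariation E / ε * δ := by
  have hmoll : mollify ε (fun q => h q - h' q - (h p - h' p)) =
      fun q => mollify ε h q - mollify ε h' q - (h p - h' p) := by
    funext q
    rw [mollify_sub hε (h := fun q => h q - h' q) (hh.sub hh') continuous_const,
      mollify_sub hε hh hh', mollify_const hε]
  have hd := ((differentiable_mollify hε hh p).hasFDerivAt.fun_sub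
    (differentiable_mollify hε hh' p).hasFDerivAt).sub_const (h p - h' p)
  rw [← hd.fderiv, ← hmoll]
  exact norm_fderiv_mollify_le hε ((hh.sub hh').sub continuous_const) hδ

theorem norm_fderiv_mollify_sub_sum_le {ι : Type*} [Fintype ι] {ψ : E → ℝ} {x : ι → E → ℝ}
    (hψ : Continuous ψ) (hx : ∀ i, Continuous (x i)) (c : ι → ℝ) {p : E}
    (hδ : ∀ q, ‖q - p‖ ≤ ε → |ψ q - ψ p - ∑ i, c i * (x i q - x i p)| ≤ δ) :
    ‖fderiv ℝ (mollify ε ψ) p - ∑ i, c i • fderiv ℝ (mollify ε (x i)) p‖ ≤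
      kernelVariation E / ε * δ := by
  have hsum : fderiv ℝ (mollify ε fun q => ∑ i, c i * x i q) p =
      ∑ i, c i • fderiv ℝ (mollify ε (x i)) p := by
    rw [funext (mollify_sum hε c hx)]
    exact (HasFDerivAt.fun_sum fun i _ =>
      (differentiable_mollify hε (hx i) p).hasFDerivAt.const_mul (c i)).fderiv
  rw [← hsum]
  refine norm_fderiv_mollify_sub_fderiv_mollify_le hε hψ (by fun_prop) fun q hq => ?_
  convert hδ q hq using 2
  simp only [mul_sub, Finset.sum_sub_distrib]
  ring

theorem norm_fderiv_mollify_le_of_abs_sub_le {h : E → ℝ} (hh : Continuous h) {p : E}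
    (hδ : ∀ q, ‖q - p‖ ≤ ε → |h q - h p| ≤ δ) :
    ‖fderiv ℝ (mollify ε h) p‖ ≤ kernelVariation E / ε * δ := by
  simpa using norm_fderiv_mollify_sub_sum_le (ι := Empty) (x := fun _ => h) hε hh (fun _ => hh)
    (fun _ => 0) (by simpa using hδ)

theorem fderiv_mollify_clm (l : StrongDual ℝ E) (p : E) : fderiv ℝ (mollify ε l) p = l := by
  have hmoll : mollify ε l = fun q => l q - ∫ z, mollKernel ε z * l z := by
    funext q
    simp only [mollify_apply, map_sub, mul_sub]
    rw [integral_sub (integrable_mollKernel_mul hε continuous_const)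
      (integrable_mollKernel_mul hε l.continuous), integral_mul_const, integral_mollKernel hε,
      one_mul]
  rw [hmoll]
  exact (l.hasFDerivAt.sub_const _).fderiv

theorem fderiv_mollify_apply_eq_zero {h : E → ℝ} (hh : Continuous h) {v : E}
    (hv : ∀ q (t : ℝ), h (q + t • v) = h q) (p : E) : fderiv ℝ (mollify ε h) p v = 0 := by
  have hinv : ∀ t : ℝ, mollify ε h (p + t • v) = mollify ε h p := by
    intro t
    simp only [mollify_apply]
    congr 1 with z
    rw [add_sub_right_comm, hv]
  rw [← (differentiable_mollify hε hh p).lineDeriv_eq_fderiv, lineDeriv]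
  simp only [hinv, deriv_const]

omit hε

theorem tendsto_mollify {h : E → ℝ} (hh : Continuous h) (p : E) :
    Filter.Tendsto (fun ε => mollify ε h p) (𝓝[>] 0) (𝓝 (h p)) := by
  rw [Metric.tendsto_nhds]
  intro η hη
  obtain ⟨r, hr, hball⟩ := Metric.continuous_iff.1 hh p (η / 2) (by positivity)
  filter_upwards [Ioo_mem_nhdsGT hr] with ε ⟨hε, hεr⟩
  rw [Real.dist_eq, ← mollify_const hε (h p) p, ← mollify_sub hε hh continuous_const]
  refine (abs_mollify_le hε fun q hq => ?_).trans_lt (half_lt_self hη)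
  exact (hball q (by rw [dist_eq_norm]; exact hq.trans_lt hεr)).le

theorem tendsto_fderiv_mollify {h : E → ℝ} (hh : Continuous h) {p : E}
    (hd : DifferentiableAt ℝ h p) :
    Filter.Tendsto (fun ε => fderiv ℝ (mollify ε h) p) (𝓝[>] 0) (𝓝 (fderiv ℝ h p)) := by
  rw [Metric.tendsto_nhds]
  intro η hη
  have hK : 0 ≤ kernelVariation E := kernelVariation_nonneg
  obtain ⟨r, hr, hball⟩ := Metric.eventually_nhds_iff_ball.1
    (hd.hasFDerivAt.isLittleO.def (c := η / (2 * (kernelVariation E + 1))) (by positivity))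
  filter_upwards [Ioo_mem_nhdsGT hr] with ε ⟨hε, hεr⟩
  replace hε : 0 < ε := hε
  have hbound := norm_fderiv_mollify_sub_fderiv_mollify_le hε hh (fderiv ℝ h p).continuous (p := p)
    (δ := η / (2 * (kernelVariation E + 1)) * ε) fun q hq => by
      have hlittle := hball q (by rw [mem_ball, dist_eq_norm]; exact hq.trans_lt hεr)
      rw [map_sub, Real.norm_eq_abs] at hlittle
      rw [sub_sub_sub_comm]
      exact hlittle.trans (by gcongr)
  rw [fderiv_mollify_clm hε] at hbound
  rw [dist_eq_norm]
  calc ‖fderiv ℝ (mollify ε h) p - fderiv ℝ h p‖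
      ≤ kernelVariation E / ε * (η / (2 * (kernelVariation E + 1)) * ε) := hbound
    _ = kernelVariation E / (kernelVariation E + 1) * (η / 2) := by field_simp
    _ ≤ 1 * (η / 2) := by
        gcongr
        exact div_le_one_of_le₀ (by linarith) (by linarith)
    _ < η := by linarith

end Mollification

/-! ### Contact geometry -/

section Contact

open scoped InnerProductSpace NNReal

/-- A point of the Heisenberg group in the coordinates `(x, y, h)` with `h = t + 2 ⟪x, y⟫`, in which
the contact form is `dh - 4 ⟪y, dx⟫`. -/
structure ContactPoint (V : Type*) where
  /-- The horizontal coordinates whose differentials enter the contact form. -/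
  x : V
  /-- The coefficients of the contact form. -/
  y : V
  /-- The contact coordinate. -/
  h : ℝ

variable {E V : Type*} [NormedAddCommGroup E] [NormedAddCommGroup V] [InnerProductSpace ℝ V]

/-- The discrete contact form: the increment of `h` not accounted for by that of `x`. -/
noncomputable def contactDefect (P Q : ContactPoint V) : ℝ :=
  Q.h - P.h - 4 * ⟪P.y, Q.x - P.x⟫_ℝ

/-- Proximity at scale `r` for the homogeneous (Korányi-type) distance of the contact space: the
contact form scales quadratically. -/
structure ContactNear (r : ℝ) (P Q : ContactPoint V) : Prop where
  norm_x_sub_le : ‖Q.x - P.x‖ ≤ r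
  norm_y_sub_le : ‖Q.y - P.y‖ ≤ r
  abs_contactDefect_le : |contactDefect P Q| ≤ r ^ 2

namespace ContactNear

variable {P M Q : ContactPoint V} {r s : ℝ}

theorem nonneg (h : ContactNear r P Q) : 0 ≤ r := (norm_nonneg _).trans h.norm_x_sub_le

theorem mono (h : ContactNear r P Q) (hrs : r ≤ s) : ContactNear s P Q :=
  ⟨h.norm_x_sub_le.trans hrs, h.norm_y_sub_le.trans hrs,
    h.abs_contactDefect_le.trans (pow_le_pow_left₀ h.nonneg hrs 2)⟩

theorem trans (h : ContactNear r P M) (h' : ContactNear s M Q) :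
    ContactNear (2 * (r + s)) P Q := by
  have hr := h.nonneg
  have hs := h'.nonneg
  refine ⟨?_, ?_, ?_⟩
  · linarith [norm_sub_le_norm_sub_add_norm_sub Q.x M.x P.x, h.norm_x_sub_le, h'.norm_x_sub_le]
  · linarith [norm_sub_le_norm_sub_add_norm_sub Q.y M.y P.y, h.norm_y_sub_le, h'.norm_y_sub_le]
  have hcross : |⟪M.y - P.y, Q.x - M.x⟫_ℝ| ≤ r * s :=
    (abs_real_inner_le_norm _ _).trans
      (mul_le_mul h.norm_y_sub_le h'.norm_x_sub_le (norm_nonneg _) hr)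
  have hsplit : contactDefect P Q =
      contactDefect P M + contactDefect M Q + 4 * ⟪M.y - P.y, Q.x - M.x⟫_ℝ := by
    simp only [contactDefect, inner_sub_left, inner_sub_right]
    ring
  have h₁ := abs_le.1 h.abs_contactDefect_le
  have h₂ := abs_le.1 h'.abs_contactDefect_le
  rw [hsplit, abs_le]
  constructor <;> nlinarith [abs_le.1 hcross]

theorem abs_h_sub_le (h : ContactNear r P Q) : |Q.h - P.h| ≤ r ^ 2 + 4 * (‖P.y‖ * r) := by
  have hinner : |⟪P.y, Q.x - P.x⟫_ℝ| ≤ ‖P.y‖ * r :=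
    (abs_real_inner_le_norm _ _).trans (by gcongr; exact h.norm_x_sub_le)
  have hdefect := h.abs_contactDefect_le
  rw [contactDefect] at hdefect
  rw [abs_le] at hinner hdefect ⊢
  constructor <;> linarith

end ContactNear

section Holder

variable {F : E → ContactPoint V} {C γ : ℝ}

theorem tendsto_const_mul_norm_sub_rpow (hγ : 0 < γ) (p : E) :
    Filter.Tendsto (fun q => C * ‖q - p‖ ^ γ) (𝓝 p) (𝓝 0) := by
  have hcont : Continuous fun q => C * ‖q - p‖ ^ γ :=
    continuous_const.mul
      ((continuous_id.sub continuous_const).norm.rpow_const fun _ => Or.inr hγ.le)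
  simpa [Real.zero_rpow hγ.ne'] using hcont.tendsto p

theorem continuous_x_of_contactNear (hγ : 0 < γ)
    (hF : ∀ p q, ‖q - p‖ ≤ 1 → ContactNear (C * ‖q - p‖ ^ γ) (F p) (F q)) :
    Continuous fun p => (F p).x := by
  refine continuous_iff_continuousAt.2 fun p => tendsto_sub_nhds_zero_iff.1 ?_
  refine squeeze_zero_norm' ?_ (tendsto_const_mul_norm_sub_rpow (C := C) hγ p)
  filter_upwards [closedBall_mem_nhds p one_pos] with q hq
  exact (hF p q (mem_closedBall_iff_norm.1 hq)).norm_x_sub_le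

theorem continuous_h_of_contactNear (hγ : 0 < γ)
    (hF : ∀ p q, ‖q - p‖ ≤ 1 → ContactNear (C * ‖q - p‖ ^ γ) (F p) (F q)) :
    Continuous fun p => (F p).h := by
  refine continuous_iff_continuousAt.2 fun p => tendsto_sub_nhds_zero_iff.1 ?_
  have hmod := tendsto_const_mul_norm_sub_rpow (C := C) hγ p
  have hlim := (hmod.pow 2).add ((hmod.const_mul ‖(F p).y‖).const_mul 4)
  norm_num at hlim
  refine squeeze_zero_norm' ?_ hlim
  filter_upwards [closedBall_mem_nhds p one_pos] with q hq
  exact (hF p q (mem_closedBall_iff_norm.1 hq)).abs_h_sub_le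

end Holder

variable [NormedSpace ℝ E]

theorem abs_contactDefect_le_of_hasFDerivAt {F : E → ContactPoint V} {x' : E → E →L[ℝ] V}
    (hx : ∀ p, HasFDerivAt (fun p => (F p).x) (x' p) p)
    (hh : ∀ p, HasFDerivAt (fun p => (F p).h) ((4 : ℝ) • (innerSL ℝ (F p).y).comp (x' p)) p)
    {K L : ℝ≥0} (hK : LipschitzWith K fun p => (F p).x) (hL : LipschitzWith L fun p => (F p).y)
    (p q : E) : |contactDefect (F p) (F q)| ≤ 4 * L * K * ‖q - p‖ ^ 2 := by
  have hderiv : ∀ z, HasFDerivAt (fun z => contactDefect (F p) (F z))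
      ((4 : ℝ) • (innerSL ℝ ((F z).y - (F p).y)).comp (x' z)) z := by
    intro z
    have hinner := ((innerSL ℝ (F p).y).hasFDerivAt.comp z ((hx z).sub_const (F p).x)).const_mul 4
    refine (((hh z).sub_const (F p).h).fun_sub hinner).congr_fderiv ?_
    ext v
    simp [mul_sub]
  have hbound : ∀ z ∈ closedBall p ‖q - p‖,
      ‖(4 : ℝ) • (innerSL ℝ ((F z).y - (F p).y)).comp (x' z)‖ ≤ 4 * L * K * ‖q - p‖ := by
    intro z hz
    have hy : ‖(F z).y - (F p).y‖ ≤ L * ‖q - p‖ :=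
      (hL.norm_sub_le z p).trans (by gcongr; exact mem_closedBall_iff_norm.1 hz)
    have hx' : ‖x' z‖ ≤ K := (hx z).le_of_lipschitz hK
    calc ‖(4 : ℝ) • (innerSL ℝ ((F z).y - (F p).y)).comp (x' z)‖
        ≤ 4 * (‖(F z).y - (F p).y‖ * ‖x' z‖) := by
          rw [norm_smul, Real.norm_of_nonneg (by norm_num)]
          gcongr
          exact (ContinuousLinearMap.opNorm_comp_le _ _).trans_eq (by rw [innerSL_apply_norm])
      _ ≤ 4 * ((L * ‖q - p‖) * K) := by gcongr
      _ = 4 * L * K * ‖q - p‖ := by ring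
  have hmean := (convex_closedBall p ‖q - p‖).norm_image_sub_le_of_norm_hasFDerivWithin_le
    (fun z _ => (hderiv z).hasFDerivWithinAt) hbound (mem_closedBall_self (norm_nonneg _))
    (mem_closedBall_iff_norm.2 le_rfl)
  have hself : contactDefect (F p) (F p) = 0 := by simp [contactDefect]
  rw [hself, sub_zero, Real.norm_eq_abs] at hmean
  exact hmean.trans_eq (by ring)

theorem exists_contactNear_of_hasFDerivAt {F : E → ContactPoint V}
    (hx : ContDiff ℝ 1 fun p => (F p).x) (hy : ContDiff ℝ 1 fun p => (F p).y)
    (hxs : HasCompactSupport fun p => (F p).x) (hys : HasCompactSupport fun p => (F p).y)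
    (hh : ∀ p, HasFDerivAt (fun p => (F p).h)
      ((4 : ℝ) • (innerSL ℝ (F p).y).comp (fderiv ℝ (fun p => (F p).x) p)) p) :
    ∃ C : ℝ, 0 ≤ C ∧ ∀ p q, ContactNear (C * ‖q - p‖) (F p) (F q) := by
  obtain ⟨K, hK⟩ := hx.lipschitzWith_of_hasCompactSupport hxs one_ne_zero
  obtain ⟨L, hL⟩ := hy.lipschitzWith_of_hasCompactSupport hys one_ne_zero
  refine ⟨2 * (K + L), by positivity, fun p q => ⟨(hK.norm_sub_le q p).trans ?_,
    (hL.norm_sub_le q p).trans ?_, (abs_contactDefect_le_of_hasFDerivAt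
      (fun p => (hx.differentiable one_ne_zero p).hasFDerivAt) hh hK hL p q).trans ?_⟩⟩
  · gcongr
    linarith [K.coe_nonneg, L.coe_nonneg]
  · gcongr
    linarith [K.coe_nonneg, L.coe_nonneg]
  · rw [mul_pow]
    gcongr
    nlinarith [K.coe_nonneg, L.coe_nonneg]

theorem exists_mem_segment_norm_eq {p q : E} {r : ℝ} (hp : ‖p‖ ≤ r) (hq : r ≤ ‖q‖) :
    ∃ m ∈ segment ℝ p q, ‖m‖ = r :=
  (convex_segment p q).isPreconnected.intermediate_value (left_mem_segment ℝ p q)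
    (right_mem_segment ℝ p q) continuous_norm.continuousOn ⟨hp, hq⟩

theorem contactNear_of_inside_of_outside {F : E → ContactPoint V} {C D γ : ℝ} (hC : 0 ≤ C)
    (hD : 0 ≤ D) (hγ₀ : 0 < γ) (hγ₁ : γ ≤ 1)
    (hin : ∀ p q, ‖p‖ ≤ 1 → ‖q‖ ≤ 1 → ContactNear (C * ‖q - p‖ ^ γ) (F p) (F q))
    (hout : ∀ p q, 1 ≤ ‖p‖ → 1 ≤ ‖q‖ → ContactNear (D * ‖q - p‖) (F p) (F q)) {p q : E}
    (hpq : ‖q - p‖ ≤ 1) : ContactNear (4 * (C + D) * ‖q - p‖ ^ γ) (F p) (F q) := by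
  have hself : ‖q - p‖ ≤ ‖q - p‖ ^ γ := by
    simpa using Real.rpow_le_rpow_of_exponent_ge' (norm_nonneg _) hpq hγ₀.le hγ₁
  have hpow : 0 ≤ ‖q - p‖ ^ γ := by positivity
  have hin' : ∀ a b, ‖a‖ ≤ 1 → ‖b‖ ≤ 1 → ‖b - a‖ ≤ ‖q - p‖ →
      ContactNear ((C + D) * ‖q - p‖ ^ γ) (F a) (F b) := fun a b ha hb hab =>
    (hin a b ha hb).mono (mul_le_mul (by linarith)
      (Real.rpow_le_rpow (norm_nonneg _) hab hγ₀.le) (by positivity) (by positivity))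
  have hout' : ∀ a b, 1 ≤ ‖a‖ → 1 ≤ ‖b‖ → ‖b - a‖ ≤ ‖q - p‖ →
      ContactNear ((C + D) * ‖q - p‖ ^ γ) (F a) (F b) := fun a b ha hb hab =>
    (hout a b ha hb).mono (mul_le_mul (by linarith) (hab.trans hself) (norm_nonneg _)
      (by positivity))
  have hmid : ∀ m ∈ segment ℝ p q, ‖m - p‖ ≤ ‖q - p‖ ∧ ‖q - m‖ ≤ ‖q - p‖ := fun m hm =>
    ⟨norm_sub_le_of_mem_segment hm, by
      rw [norm_sub_rev q m, norm_sub_rev q p]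
      exact norm_sub_le_of_mem_segment (segment_symm ℝ p q ▸ hm)⟩
  rcases le_total ‖p‖ 1 with hp | hp <;> rcases le_total ‖q‖ 1 with hq | hq
  · exact (hin' p q hp hq le_rfl).mono (by nlinarith)
  · obtain ⟨m, hm, hm₁⟩ := exists_mem_segment_norm_eq hp hq
    exact ((hin' p m hp hm₁.le (hmid m hm).1).trans (hout' m q hm₁.ge hq (hmid m hm).2)).mono
      (by linarith)
  · obtain ⟨m, hm, hm₁⟩ := exists_mem_segment_norm_eq hq hp
    rw [segment_symm] at hm
    exact ((hout' p m hp hm₁.ge (hmid m hm).1).trans (hin' m q hm₁.le hq (hmid m hm).2)).mono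
      (by linarith)
  · exact (hout' p q hp hq le_rfl).mono (by nlinarith)

end Contact

/-! ### The profile -/

section Profile

open scoped InnerProductSpace

theorem hasDerivAt_sq_max_zero (s : ℝ) :
    HasDerivAt (fun s : ℝ => (max s 0) ^ 2) (2 * max s 0) s := by
  rcases lt_trichotomy s 0 with hs | rfl | hs
  · rw [max_eq_right hs.le, mul_zero]
    refine (hasDerivAt_const s (0 : ℝ)).congr_of_eventuallyEq ?_
    filter_upwards [gt_mem_nhds hs] with r hr
    simp [max_eq_right hr.le]
  · rw [max_self, mul_zero, hasDerivAt_iff_isLittleO]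
    refine Asymptotics.IsBigO.trans_isLittleO (g := fun r : ℝ => r ^ 2) ?_ ?_
    · refine Asymptotics.IsBigO.of_bound 1 (Filter.Eventually.of_forall fun r => ?_)
      have hsq : max r 0 ^ 2 ≤ r ^ 2 := by
        rcases max_choice r 0 with h | h <;> rw [h]
        simpa using sq_nonneg r
      simpa using hsq
    · simpa using Asymptotics.isLittleO_pow_id (𝕜 := ℝ) one_lt_two
  · rw [max_eq_left hs.le]
    refine HasDerivAt.congr_of_eventuallyEq (f := fun r => r ^ 2) ?_ ?_
    · simpa using hasDerivAt_pow 2 s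
    filter_upwards [lt_mem_nhds hs] with r hr
    simp [max_eq_left hr.le]

theorem contDiff_sq_max_zero : ContDiff ℝ 1 fun s : ℝ => (max s 0) ^ 2 := by
  rw [contDiff_one_iff_deriv]
  refine ⟨fun s => (hasDerivAt_sq_max_zero s).differentiableAt, ?_⟩
  rw [funext fun s => (hasDerivAt_sq_max_zero s).deriv]
  fun_prop

variable {V : Type*} [NormedAddCommGroup V]

/-- The cutoff factor of the profile, supported in the ball of radius `1/2`. -/
noncomputable def cutoff (a : V) : ℝ := max (1 - 4 * ‖a‖ ^ 2) 0

theorem cutoff_zero : cutoff (0 : V) = 1 := by simp [cutoff]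

theorem cutoff_eq_zero {a : V} (ha : 1 / 2 ≤ ‖a‖) : cutoff a = 0 :=
  max_eq_right (by nlinarith)

theorem cutoff_eq_of_norm_le {a : V} (ha : ‖a‖ ≤ 1 / 2) : cutoff a = 1 - 4 * ‖a‖ ^ 2 :=
  max_eq_left (by nlinarith [norm_nonneg a])

variable [InnerProductSpace ℝ V]

theorem contDiff_cutoff_sq : ContDiff ℝ 1 fun a : V => cutoff a ^ 2 :=
  contDiff_sq_max_zero.comp (contDiff_const.sub (contDiff_const.mul (contDiff_norm_sq ℝ)))

theorem hasFDerivAt_const_sub_mul_norm_sq (b c : ℝ) (a : V) :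
    HasFDerivAt (fun a : V => b - c * ‖a‖ ^ 2) ((-2 * c) • innerSL ℝ a) a := by
  refine (((hasStrictFDerivAt_norm_sq a).hasFDerivAt.const_mul c).const_sub b).congr_fderiv ?_
  ext v
  simp
  ring

theorem hasFDerivAt_cutoff_sq (a : V) :
    HasFDerivAt (fun a : V => cutoff a ^ 2) ((-16 * cutoff a) • innerSL ℝ a) a := by
  refine ((hasDerivAt_sq_max_zero (1 - 4 * ‖a‖ ^ 2)).comp_hasFDerivAt a
    (hasFDerivAt_const_sub_mul_norm_sq 1 4 a)).congr_fderiv ?_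
  ext v
  simp only [smul_smul, cutoff]
  ring_nf

/-- The contact map `ℝ^N → ℍ^N` from which the boundary map is assembled. It is radial, so that
`dh = 4 ⟪y, dx⟫` can be solved for `y`; the cubed factor of `h` vanishes where the derivative of
`x` degenerates and makes the sign of `h` that of the Jacobian of `x`. -/
noncomputable def profile (a : V) : ContactPoint V where
  x := cutoff a ^ 2 • a
  y := (-2 * cutoff a ^ 2 * (1 - 20 * ‖a‖ ^ 2) * (19 - 140 * ‖a‖ ^ 2)) • a
  h := cutoff a ^ 4 * (1 - 20 * ‖a‖ ^ 2) ^ 3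

theorem profile_x_eq_zero {a : V} (ha : 1 / 2 ≤ ‖a‖) : (profile a).x = 0 := by
  simp [profile, cutoff_eq_zero ha]

theorem profile_y_eq_zero {a : V} (ha : 1 / 2 ≤ ‖a‖) : (profile a).y = 0 := by
  simp [profile, cutoff_eq_zero ha]

theorem profile_h_eq_zero {a : V} (ha : 1 / 2 ≤ ‖a‖) : (profile a).h = 0 := by
  simp [profile, cutoff_eq_zero ha]

theorem contDiff_profile_x : ContDiff ℝ 1 fun a : V => (profile a).x :=
  contDiff_cutoff_sq.smul contDiff_id

theorem contDiff_profile_y : ContDiff ℝ 1 fun a : V => (profile a).y := by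
  have hsq := contDiff_norm_sq (E := V) ℝ (n := 1)
  exact (((contDiff_const.mul contDiff_cutoff_sq).mul
    (contDiff_const.sub (contDiff_const.mul hsq))).mul
    (contDiff_const.sub (contDiff_const.mul hsq))).smul contDiff_id

theorem hasFDerivAt_profile_x (a : V) :
    HasFDerivAt (fun a : V => (profile a).x)
      (cutoff a ^ 2 • ContinuousLinearMap.id ℝ V + ((-16 * cutoff a) • innerSL ℝ a).smulRight a)
      a :=
  (hasFDerivAt_cutoff_sq a).smul (hasFDerivAt_id a)

theorem fderiv_profile_x_eq_zero {a : V} (ha : 1 / 2 ≤ ‖a‖) :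
    fderiv ℝ (fun a : V => (profile a).x) a = 0 := by
  rw [(hasFDerivAt_profile_x a).fderiv, cutoff_eq_zero ha]
  ext v
  simp

theorem hasFDerivAt_profile_h (a : V) :
    HasFDerivAt (fun a : V => (profile a).h)
      ((-8 * cutoff a ^ 3 * (1 - 20 * ‖a‖ ^ 2) ^ 2 * (19 - 140 * ‖a‖ ^ 2)) • innerSL ℝ a) a := by
  have hprod := ((hasFDerivAt_cutoff_sq a).pow 2).mul
    ((hasFDerivAt_const_sub_mul_norm_sq 1 20 a).pow 3)
  simp only [← pow_mul] at hprod
  refine hprod.congr_fderiv ?_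
  ext v
  rcases le_total (1 / 2) ‖a‖ with ha | ha
  · simp [cutoff_eq_zero ha]
  · simp [cutoff_eq_of_norm_le ha]
    ring

theorem hasFDerivAt_profile_h_eq_inner (a : V) :
    HasFDerivAt (fun a : V => (profile a).h)
      ((4 : ℝ) • (innerSL ℝ (profile a).y).comp (fderiv ℝ (fun a : V => (profile a).x) a)) a := by
  refine (hasFDerivAt_profile_h a).congr_fderiv ?_
  rw [(hasFDerivAt_profile_x a).fderiv]
  ext v
  rcases le_total (1 / 2) ‖a‖ with ha | ha
  · simp [cutoff_eq_zero ha]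
  · simp [profile, cutoff_eq_of_norm_le ha, inner_smul_right]
    ring

theorem continuous_profile_h : Continuous fun a : V => (profile a).h :=
  continuous_iff_continuousAt.2 fun a => (hasFDerivAt_profile_h a).continuousAt

theorem abs_inner_profile_y_sub_x_le {C : ℝ}
    (hC : ∀ p q : V, ContactNear (C * ‖q - p‖) (profile p) (profile q)) {a b : V}
    (hab : 1 ≤ ‖a‖ ^ 2 + ‖b‖ ^ 2) (b' : V) :
    |⟪(profile a).y, (profile b').x - (profile b).x⟫_ℝ| ≤ 2 * (C * ‖b' - b‖) ^ 2 := by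
  have hpos : 0 ≤ 2 * (C * ‖b' - b‖) ^ 2 := by positivity
  rcases le_or_gt (1 / 2) ‖a‖ with ha | ha
  · simpa [profile_y_eq_zero ha] using hpos
  have hb : 5 / 6 ≤ ‖b‖ := by nlinarith [norm_nonneg a, norm_nonneg b]
  rcases le_or_gt (1 / 2) ‖b'‖ with hb' | hb'
  · simpa [profile_x_eq_zero hb', profile_x_eq_zero (a := b) (by linarith)] using hpos
  have hdist : ‖a‖ ≤ 2 * ‖b' - b‖ := by linarith [norm_sub_norm_le b b', norm_sub_rev b b']
  have hy : ‖(profile a).y‖ ≤ C * ‖a‖ := by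
    simpa [profile] using (hC 0 a).norm_y_sub_le
  calc |⟪(profile a).y, (profile b').x - (profile b).x⟫_ℝ|
      ≤ (C * ‖a‖) * (C * ‖b' - b‖) :=
        (abs_real_inner_le_norm _ _).trans (mul_le_mul hy (hC b b').norm_x_sub_le
          (norm_nonneg _) ((norm_nonneg _).trans hy))
    _ = C ^ 2 * ‖b' - b‖ * ‖a‖ := by ring
    _ ≤ C ^ 2 * ‖b' - b‖ * (2 * ‖b' - b‖) := by gcongr
    _ = 2 * (C * ‖b' - b‖) ^ 2 := by ring

variable [FiniteDimensional ℝ V]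

theorem hasCompactSupport_of_forall_norm_ge {W : Type*} [Zero W] {g : V → W} {R : ℝ}
    (hg : ∀ a, R ≤ ‖a‖ → g a = 0) : HasCompactSupport g :=
  HasCompactSupport.intro (isCompact_closedBall 0 R) fun a ha =>
    hg a (not_le.1 (by simpa using ha)).le

theorem exists_contactNear_profile :
    ∃ C : ℝ, 0 ≤ C ∧ ∀ p q : V, ContactNear (C * ‖q - p‖) (profile p) (profile q) :=
  exists_contactNear_of_hasFDerivAt contDiff_profile_x contDiff_profile_y
    (hasCompactSupport_of_forall_norm_ge fun _ => profile_x_eq_zero)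
    (hasCompactSupport_of_forall_norm_ge fun _ => profile_y_eq_zero)
    hasFDerivAt_profile_h_eq_inner

theorem exists_abs_profile_h_le : ∃ M : ℝ, ∀ a : V, |(profile a).h| ≤ M :=
  (hasCompactSupport_of_forall_norm_ge fun _ =>
    profile_h_eq_zero).exists_bound_of_continuous continuous_profile_h

end Profile

/-! ### Two copies of the profile -/

section ProfileMass

variable {ι : Type*} [Fintype ι]

theorem contDiff_profile_x_apply (i : ι) :
    ContDiff ℝ 1 fun a : EuclideanSpace ℝ ι => (profile a).x i :=
  contDiff_euclidean.1 contDiff_profile_x i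

theorem fderiv_profile_x_apply (i : ι) (a v : EuclideanSpace ℝ ι) :
    fderiv ℝ (fun a : EuclideanSpace ℝ ι => (profile a).x i) a v =
      fderiv ℝ (fun a : EuclideanSpace ℝ ι => (profile a).x) a v i := by
  have hcomp := (EuclideanSpace.proj (𝕜 := ℝ) i).hasFDerivAt.comp a (hasFDerivAt_profile_x a)
  rw [(hasFDerivAt_profile_x a).fderiv]
  exact congrArg (· v) hcomp.fderiv

theorem fderiv_profile_x_apply_eq_zero (i : ι) {a : EuclideanSpace ℝ ι} (ha : 1 / 2 ≤ ‖a‖) :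
    fderiv ℝ (fun a : EuclideanSpace ℝ ι => (profile a).x i) a = 0 := by
  ext v
  simp [fderiv_profile_x_apply, fderiv_profile_x_eq_zero ha]

variable [DecidableEq ι]

/-- The density of `h dx₁ ∧ ⋯ ∧ dx_N` pulled back by the profile. -/
noncomputable def profileMass (a : EuclideanSpace ℝ ι) : ℝ :=
  (profile a).h * covectorDet ι fun i => fderiv ℝ (fun a => (profile a).x i) a

theorem covectorDet_fderiv_profile_x {a : EuclideanSpace ℝ ι} (ha : 0 < cutoff a) :
    covectorDet ι (fun i => fderiv ℝ (fun a => (profile a).x i) a) =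
      (cutoff a ^ 2) ^ Fintype.card ι * (1 - 16 * ‖a‖ ^ 2 / cutoff a) := by
  have hrankOne : (Matrix.of fun i k => fderiv ℝ (fun a : EuclideanSpace ℝ ι => (profile a).x i) a
      (EuclideanSpace.single k 1)) =
      (cutoff a ^ 2) • (1 + Matrix.replicateCol Unit (fun i => -16 / cutoff a * a i) *
        Matrix.replicateRow Unit a) := by
    ext i k
    rw [Matrix.of_apply, fderiv_profile_x_apply, (hasFDerivAt_profile_x a).fderiv]
    simp [Matrix.mul_apply, Matrix.one_apply, EuclideanSpace.inner_single_right]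
    field_simp
    split_ifs <;> ring
  have hdot : a ⬝ᵥ (fun i => -16 / cutoff a * a i) = -16 / cutoff a * ‖a‖ ^ 2 := by
    simp only [EuclideanSpace.norm_sq_eq, Real.norm_eq_abs, sq_abs, Finset.mul_sum, dotProduct]
    exact Finset.sum_congr rfl fun i _ => by ring
  rw [covectorDet_apply, hrankOne, Matrix.det_smul,
    Matrix.det_one_add_replicateCol_mul_replicateRow, hdot]
  ring

theorem profileMass_nonneg (a : EuclideanSpace ℝ ι) : 0 ≤ profileMass a := by
  rcases le_or_gt (1 / 2) ‖a‖ with ha | ha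
  · simp [profileMass, profile_h_eq_zero ha]
  have hcut : cutoff a = 1 - 4 * ‖a‖ ^ 2 := cutoff_eq_of_norm_le ha.le
  have hpos : 0 < cutoff a := by nlinarith [norm_nonneg a]
  have hjac : 1 - 16 * ‖a‖ ^ 2 / cutoff a = (1 - 20 * ‖a‖ ^ 2) / cutoff a := by
    field_simp
    rw [hcut]
    ring
  have hmass : profileMass a = cutoff a ^ 4 * (cutoff a ^ 2) ^ Fintype.card ι / cutoff a *
      (1 - 20 * ‖a‖ ^ 2) ^ 4 := by
    rw [profileMass, covectorDet_fderiv_profile_x hpos, hjac, profile]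
    ring
  rw [hmass]
  positivity

theorem profileMass_zero : profileMass (0 : EuclideanSpace ℝ ι) = 1 := by
  rw [profileMass, covectorDet_fderiv_profile_x (by simp [cutoff_zero])]
  simp [profile, cutoff_zero]

theorem profileMass_eq_zero {a : EuclideanSpace ℝ ι} (ha : 1 / 2 ≤ ‖a‖) : profileMass a = 0 := by
  rw [profileMass, profile_h_eq_zero ha, zero_mul]

end ProfileMass

section DoubleProfile

open scoped InnerProductSpace

variable {ι : Type*} [Fintype ι]

/-- The projection of `ℝ^N × ℝ^N` to its first factor. -/
noncomputable def leftPart : EuclideanSpace ℝ (ι ⊕ ι) →L[ℝ] EuclideanSpace ℝ ι :=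
  LinearMap.toContinuousLinearMap
    { toFun := fun p => WithLp.toLp 2 fun i => p (Sum.inl i)
      map_add' := fun _ _ => rfl
      map_smul' := fun _ _ => rfl }

/-- The projection of `ℝ^N × ℝ^N` to its second factor. -/
noncomputable def rightPart : EuclideanSpace ℝ (ι ⊕ ι) →L[ℝ] EuclideanSpace ℝ ι :=
  LinearMap.toContinuousLinearMap
    { toFun := fun p => WithLp.toLp 2 fun i => p (Sum.inr i)
      map_add' := fun _ _ => rfl
      map_smul' := fun _ _ => rfl }

@[simp]
theorem leftPart_apply (p : EuclideanSpace ℝ (ι ⊕ ι)) (i : ι) : leftPart p i = p (Sum.inl i) := rfl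

@[simp]
theorem rightPart_apply (p : EuclideanSpace ℝ (ι ⊕ ι)) (i : ι) :
    rightPart p i = p (Sum.inr i) := rfl

theorem norm_leftPart_sq_add_norm_rightPart_sq (p : EuclideanSpace ℝ (ι ⊕ ι)) :
    ‖leftPart p‖ ^ 2 + ‖rightPart p‖ ^ 2 = ‖p‖ ^ 2 := by
  simp [EuclideanSpace.norm_sq_eq, Fintype.sum_sum_type]

theorem norm_leftPart_le (p : EuclideanSpace ℝ (ι ⊕ ι)) : ‖leftPart p‖ ≤ ‖p‖ :=
  le_of_sq_le_sq (by nlinarith [norm_leftPart_sq_add_norm_rightPart_sq p]) (norm_nonneg _)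

theorem norm_rightPart_le (p : EuclideanSpace ℝ (ι ⊕ ι)) : ‖rightPart p‖ ≤ ‖p‖ :=
  le_of_sq_le_sq (by nlinarith [norm_leftPart_sq_add_norm_rightPart_sq p]) (norm_nonneg _)

/-- The sum of a copy of the profile in each factor of `ℝ^N × ℝ^N`, whose restriction to the unit
sphere is the boundary map. The contact condition is lost where both copies are nonzero, but this
happens inside the unit ball only. -/
noncomputable def doubleProfile (p : EuclideanSpace ℝ (ι ⊕ ι)) :
    ContactPoint (EuclideanSpace ℝ ι) where
  x := (profile (leftPart p)).x + (profile (rightPart p)).x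
  y := (profile (leftPart p)).y + (profile (rightPart p)).y
  h := (profile (leftPart p)).h + (profile (rightPart p)).h

theorem contDiff_doubleProfile_x_apply (i : ι) :
    ContDiff ℝ 1 fun p : EuclideanSpace ℝ (ι ⊕ ι) => (doubleProfile p).x i := by
  have hx := contDiff_profile_x_apply i
  simpa only [doubleProfile, PiLp.add_apply, Function.comp_def] using
    (hx.comp leftPart.contDiff).add (hx.comp rightPart.contDiff)

theorem fderiv_doubleProfile_x_apply (i : ι) (p : EuclideanSpace ℝ (ι ⊕ ι)) :
    fderiv ℝ (fun p : EuclideanSpace ℝ (ι ⊕ ι) => (doubleProfile p).x i) p =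
      (fderiv ℝ (fun a : EuclideanSpace ℝ ι => (profile a).x i) (leftPart p)).comp leftPart +
      (fderiv ℝ (fun a : EuclideanSpace ℝ ι => (profile a).x i) (rightPart p)).comp
        rightPart := by
  have hx := (contDiff_profile_x_apply i).differentiable one_ne_zero
  exact (((hx _).hasFDerivAt.comp p leftPart.hasFDerivAt).fun_add
    ((hx _).hasFDerivAt.comp p rightPart.hasFDerivAt)).fderiv

theorem continuous_doubleProfile_h :
    Continuous fun p : EuclideanSpace ℝ (ι ⊕ ι) => (doubleProfile p).h :=
  (continuous_profile_h.comp leftPart.continuous).add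
    (continuous_profile_h.comp rightPart.continuous)

theorem exists_abs_doubleProfile_h_le :
    ∃ M : ℝ, ∀ p : EuclideanSpace ℝ (ι ⊕ ι), |(doubleProfile p).h| ≤ M := by
  obtain ⟨M, hM⟩ := exists_abs_profile_h_le (V := EuclideanSpace ℝ ι)
  exact ⟨M + M, fun p => (abs_add_le _ _).trans (add_le_add (hM _) (hM _))⟩

section Near

variable {C : ℝ}
  (hC : ∀ a b : EuclideanSpace ℝ ι, ContactNear (C * ‖b - a‖) (profile a) (profile b))
include hC

theorem contactNear_profile_leftPart (p q : EuclideanSpace ℝ (ι ⊕ ι)) :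
    ContactNear (C * ‖leftPart (q - p)‖) (profile (leftPart p)) (profile (leftPart q)) := by
  simpa only [map_sub] using hC (leftPart p) (leftPart q)

theorem contactNear_profile_rightPart (p q : EuclideanSpace ℝ (ι ⊕ ι)) :
    ContactNear (C * ‖rightPart (q - p)‖) (profile (rightPart p)) (profile (rightPart q)) := by
  simpa only [map_sub] using hC (rightPart p) (rightPart q)

theorem abs_contactDefect_doubleProfile_le {p : EuclideanSpace ℝ (ι ⊕ ι)} (hp : 1 ≤ ‖p‖)
    (q : EuclideanSpace ℝ (ι ⊕ ι)) :
    |contactDefect (doubleProfile p) (doubleProfile q)| ≤ (3 * C * ‖q - p‖) ^ 2 := by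
  have hsplit : contactDefect (doubleProfile p) (doubleProfile q) =
      contactDefect (profile (leftPart p)) (profile (leftPart q)) +
      contactDefect (profile (rightPart p)) (profile (rightPart q)) -
      4 * (⟪(profile (leftPart p)).y, (profile (rightPart q)).x - (profile (rightPart p)).x⟫_ℝ +
        ⟪(profile (rightPart p)).y, (profile (leftPart q)).x - (profile (leftPart p)).x⟫_ℝ) := by
    simp only [contactDefect, doubleProfile, inner_add_left, inner_add_right, inner_sub_right]
    ring
  have hp₂ : 1 ≤ ‖leftPart p‖ ^ 2 + ‖rightPart p‖ ^ 2 := by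
    rw [norm_leftPart_sq_add_norm_rightPart_sq]
    nlinarith
  have hleft := (contactNear_profile_leftPart hC p q).abs_contactDefect_le
  have hright := (contactNear_profile_rightPart hC p q).abs_contactDefect_le
  have hcross := abs_inner_profile_y_sub_x_le hC hp₂ (rightPart q)
  have hcross' := abs_inner_profile_y_sub_x_le hC ((add_comm _ _).ge.trans' hp₂) (leftPart q)
  rw [← map_sub] at hcross hcross'
  have hnorm : (3 * C * ‖q - p‖) ^ 2 =
      9 * ((C * ‖leftPart (q - p)‖) ^ 2 + (C * ‖rightPart (q - p)‖) ^ 2) := by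
    linear_combination -9 * C ^ 2 * norm_leftPart_sq_add_norm_rightPart_sq (q - p)
  rw [hsplit, hnorm]
  rw [abs_le] at hleft hright hcross hcross' ⊢
  constructor <;> linarith

variable (hC₀ : 0 ≤ C)
include hC₀

theorem norm_doubleProfile_x_sub_le (p q : EuclideanSpace ℝ (ι ⊕ ι)) :
    ‖(doubleProfile q).x - (doubleProfile p).x‖ ≤ 3 * C * ‖q - p‖ := by
  have hleft := (contactNear_profile_leftPart hC p q).norm_x_sub_le
  have hright := (contactNear_profile_rightPart hC p q).norm_x_sub_le
  rw [doubleProfile, doubleProfile, add_sub_add_comm]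
  refine (norm_add_le _ _).trans ?_
  nlinarith [norm_leftPart_le (q - p), norm_rightPart_le (q - p), norm_nonneg (q - p)]

theorem norm_doubleProfile_y_sub_le (p q : EuclideanSpace ℝ (ι ⊕ ι)) :
    ‖(doubleProfile q).y - (doubleProfile p).y‖ ≤ 3 * C * ‖q - p‖ := by
  have hleft := (contactNear_profile_leftPart hC p q).norm_y_sub_le
  have hright := (contactNear_profile_rightPart hC p q).norm_y_sub_le
  rw [doubleProfile, doubleProfile, add_sub_add_comm]
  refine (norm_add_le _ _).trans ?_
  nlinarith [norm_leftPart_le (q - p), norm_rightPart_le (q - p), norm_nonneg (q - p)]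

end Near

theorem exists_norm_doubleProfile_x_sub_le : ∃ C : ℝ, 0 ≤ C ∧
    ∀ p q : EuclideanSpace ℝ (ι ⊕ ι),
      ‖(doubleProfile q).x - (doubleProfile p).x‖ ≤ C * ‖q - p‖ := by
  obtain ⟨C, hC₀, hC⟩ := exists_contactNear_profile (V := EuclideanSpace ℝ ι)
  exact ⟨3 * C, by positivity, norm_doubleProfile_x_sub_le hC hC₀⟩

theorem exists_contactNear_doubleProfile : ∃ C : ℝ, 0 ≤ C ∧
    ∀ p q : EuclideanSpace ℝ (ι ⊕ ι), 1 ≤ ‖p‖ →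
      ContactNear (C * ‖q - p‖) (doubleProfile p) (doubleProfile q) := by
  obtain ⟨C, hC₀, hC⟩ := exists_contactNear_profile (V := EuclideanSpace ℝ ι)
  exact ⟨3 * C, by positivity, fun p q hp => ⟨norm_doubleProfile_x_sub_le hC hC₀ p q,
    norm_doubleProfile_y_sub_le hC hC₀ p q, abs_contactDefect_doubleProfile_le hC hp q⟩⟩

end DoubleProfile

/-! ### The pairing of the two copies -/

section DoublePairing

variable {ι : Type*} [Fintype ι] [DecidableEq ι]

theorem covectorDet_comp_leftPart_comp_rightPart (u v : ι → Covector ι) :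
    covectorDet (ι ⊕ ι) (Sum.elim (fun i => (u i).comp leftPart) fun i => (v i).comp rightPart) =
      covectorDet ι u * covectorDet ι v := by
  have hl : ∀ k : ι, leftPart (EuclideanSpace.single (Sum.inl k) (1 : ℝ)) =
      EuclideanSpace.single k 1 := fun k => by ext i; simp
  have hr : ∀ k : ι, rightPart (EuclideanSpace.single (Sum.inr k) (1 : ℝ)) =
      EuclideanSpace.single k 1 := fun k => by ext i; simp
  have hl₀ : ∀ k : ι, leftPart (EuclideanSpace.single (Sum.inr k) (1 : ℝ)) = 0 :=
    fun k => by ext i; simp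
  have hr₀ : ∀ k : ι, rightPart (EuclideanSpace.single (Sum.inl k) (1 : ℝ)) = 0 :=
    fun k => by ext i; simp
  simp only [covectorDet_apply]
  rw [← Matrix.det_fromBlocks_zero₂₁ _ 0]
  congr 1
  ext (i | i) (k | k) <;> simp [hl, hr, hl₀, hr₀]

theorem sign_sumComm :
    (Equiv.Perm.sign (Equiv.sumComm ι ι) : ℤ) = (-1) ^ Fintype.card ι := by
  have hperm := Matrix.det_permute (Equiv.sumComm ι ι) (1 : Matrix (ι ⊕ ι) (ι ⊕ ι) ℤ)
  have hblocks : (1 : Matrix (ι ⊕ ι) (ι ⊕ ι) ℤ).submatrix (Equiv.sumComm ι ι) id =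
      Matrix.fromBlocks 0 1 1 0 := by
    ext (i | i) (k | k) <;> simp [Matrix.one_apply]
  have hfactor : Matrix.fromBlocks (1 : Matrix ι ι ℤ) 1 0 (1 : Matrix ι ι ℤ) *
      Matrix.fromBlocks 0 1 1 0 = Matrix.fromBlocks 1 1 1 0 := by
    simp [Matrix.fromBlocks_multiply]
  have hdet := congrArg Matrix.det hfactor
  rw [Matrix.det_mul, Matrix.det_fromBlocks_zero₂₁, Matrix.det_fromBlocks_one₁₁] at hdet
  rw [Matrix.det_one, mul_one, hblocks] at hperm
  simpa [hperm, Matrix.det_neg] using hdet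

theorem covectorDet_sumElim_comm (hι : Even (Fintype.card ι)) (u v : ι → Covector (ι ⊕ ι)) :
    covectorDet (ι ⊕ ι) (Sum.elim u v) = covectorDet (ι ⊕ ι) (Sum.elim v u) := by
  have hswap : Sum.elim u v = Sum.elim v u ∘ Equiv.sumComm ι ι := by
    ext (i | i) <;> rfl
  rw [hswap]
  refine ((covectorDet (ι ⊕ ι)).toAlternatingMap.map_perm _ _).trans ?_
  have hsign : Equiv.Perm.sign (Equiv.sumComm ι ι) = 1 :=
    Units.ext (sign_sumComm.trans hι.neg_one_pow)
  rw [hsign, one_smul]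
  rfl

/-- The diagonal direction in which the two copies are translated. -/
noncomputable def diagDir (i₀ : ι) : EuclideanSpace ℝ (ι ⊕ ι) :=
  EuclideanSpace.single (Sum.inl i₀) 1 + EuclideanSpace.single (Sum.inr i₀) 1

theorem leftPart_diagDir (i₀ : ι) : leftPart (diagDir i₀) = EuclideanSpace.single i₀ 1 := by
  ext i
  simp [diagDir]

theorem rightPart_diagDir (i₀ : ι) : rightPart (diagDir i₀) = EuclideanSpace.single i₀ 1 := by
  ext i
  simp [diagDir]

theorem half_le_norm_or_half_le_norm_add (i₀ : ι) (a : EuclideanSpace ℝ ι) :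
    1 / 2 ≤ ‖a‖ ∨ 1 / 2 ≤ ‖a + (10 : ℝ) • EuclideanSpace.single i₀ (1 : ℝ)‖ := by
  have hdist := norm_sub_le (a + (10 : ℝ) • EuclideanSpace.single i₀ (1 : ℝ)) a
  rw [add_sub_cancel_left, norm_smul, PiLp.norm_single] at hdist
  by_contra! hsmall
  norm_num at hdist
  linarith

theorem pairingDensity_doubleProfile (hι : Even (Fintype.card ι)) (i₀ : ι)
    (p : EuclideanSpace ℝ (ι ⊕ ι)) :
    pairingDensity (fun i p => (doubleProfile p).x i) (fun p => (doubleProfile p).h)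
        (diagDir i₀) 10 p =
      profileMass (leftPart p + (10 : ℝ) • EuclideanSpace.single i₀ 1) *
        profileMass (rightPart p) +
      profileMass (rightPart p + (10 : ℝ) • EuclideanSpace.single i₀ 1) *
        profileMass (leftPart p) := by
  simp only [pairingDensity, gradPair, fderiv_doubleProfile_x_apply]
  simp only [doubleProfile, map_add, map_smul, leftPart_diagDir, rightPart_diagDir]
  rcases half_le_norm_or_half_le_norm_add i₀ (leftPart p) with ha | ha <;>
    rcases half_le_norm_or_half_le_norm_add i₀ (rightPart p) with hb | hb <;>
    simp only [fderiv_profile_x_apply_eq_zero _ ha, fderiv_profile_x_apply_eq_zero _ hb,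
      profile_h_eq_zero ha, profile_h_eq_zero hb, profileMass_eq_zero ha, profileMass_eq_zero hb,
      ContinuousLinearMap.zero_comp, add_zero, zero_add, mul_zero, zero_mul]
  · rw [covectorDet_comp_leftPart_comp_rightPart, profileMass, profileMass]
    ring
  · rw [covectorDet_sumElim_comm hι, covectorDet_comp_leftPart_comp_rightPart, profileMass,
      profileMass]
    ring

theorem profileMass_add_mul_profileMass_eq_zero (i₀ : ι) {a b : EuclideanSpace ℝ ι}
    (hab : 40 ^ 2 < ‖a‖ ^ 2 + ‖b‖ ^ 2) :
    profileMass (a + (10 : ℝ) • EuclideanSpace.single i₀ 1) * profileMass b = 0 := by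
  rcases le_or_gt (1 / 2) ‖b‖ with hb | hb
  · rw [profileMass_eq_zero hb, mul_zero]
  have ha : 20 ≤ ‖a‖ := by nlinarith [norm_nonneg a, norm_nonneg b]
  have hdist := norm_le_add_norm_add a ((10 : ℝ) • EuclideanSpace.single i₀ (1 : ℝ))
  rw [norm_smul, PiLp.norm_single] at hdist
  norm_num at hdist
  rw [profileMass_eq_zero (by linarith), zero_mul]

theorem hasCompactSupport_pairingDensity_doubleProfile (hι : Even (Fintype.card ι)) (i₀ : ι) :
    HasCompactSupport (pairingDensity (fun i p => (doubleProfile p).x i)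
      (fun p : EuclideanSpace ℝ (ι ⊕ ι) => (doubleProfile p).h) (diagDir i₀) 10) := by
  refine HasCompactSupport.intro (isCompact_closedBall 0 40) fun p hp => ?_
  have hnorm : 40 ^ 2 < ‖leftPart p‖ ^ 2 + ‖rightPart p‖ ^ 2 := by
    rw [norm_leftPart_sq_add_norm_rightPart_sq]
    rw [mem_closedBall_zero_iff, not_le] at hp
    gcongr
  rw [pairingDensity_doubleProfile hι, profileMass_add_mul_profileMass_eq_zero i₀ hnorm,
    profileMass_add_mul_profileMass_eq_zero i₀ (by rwa [add_comm]), add_zero]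

theorem integral_pairingDensity_doubleProfile_pos (hι : Even (Fintype.card ι)) (i₀ : ι) :
    0 < ∫ p, pairingDensity (fun i p => (doubleProfile p).x i)
      (fun p : EuclideanSpace ℝ (ι ⊕ ι) => (doubleProfile p).h) (diagDir i₀) 10 p := by
  have hcont := (continuous_pairingDensity (diagDir i₀) contDiff_doubleProfile_x_apply
    continuous_doubleProfile_h).comp (Continuous.prodMk_right (10 : ℝ))
  refine hcont.integral_pos_of_hasCompactSupport_nonneg_nonzero
    (x := EuclideanSpace.single (Sum.inl i₀) (-10 : ℝ))
    (hasCompactSupport_pairingDensity_doubleProfile hι i₀) (fun p => ?_) ?_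
  · simp only [Pi.zero_apply, pairingDensity_doubleProfile hι]
    exact add_nonneg (mul_nonneg (profileMass_nonneg _) (profileMass_nonneg _))
      (mul_nonneg (profileMass_nonneg _) (profileMass_nonneg _))
  · have hleft : leftPart (EuclideanSpace.single (Sum.inl i₀) (-10 : ℝ)) +
        (10 : ℝ) • EuclideanSpace.single i₀ (1 : ℝ) = (0 : EuclideanSpace ℝ ι) := by
      ext i
      by_cases hi : i = i₀ <;> simp [hi]
    have hright : rightPart (EuclideanSpace.single (Sum.inl i₀) (-10 : ℝ)) =
        (0 : EuclideanSpace ℝ ι) := by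
      ext i
      simp
    simp only [pairingDensity_doubleProfile hι, hleft, hright, profileMass_zero]
    exact (add_pos_of_pos_of_nonneg (by norm_num)
      (mul_nonneg (profileMass_nonneg _) (profileMass_nonneg _))).ne'

end DoublePairing

/-! ### Extensions of the boundary map -/

section Obstruction

variable {ι : Type*} [Fintype ι]

theorem norm_map_sub_norm_sub_le {π : EuclideanSpace ℝ (ι ⊕ ι) →L[ℝ] EuclideanSpace ℝ ι}
    (hπ : ∀ q, ‖π q‖ ≤ ‖q‖) (p q : EuclideanSpace ℝ (ι ⊕ ι)) : ‖π p‖ - ‖q - p‖ ≤ ‖π q‖ := by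
  have hdist := norm_sub_norm_le (π p) (π q)
  rw [← map_sub] at hdist
  linarith [hπ (p - q), norm_sub_rev p q]

variable {ε : ℝ} (hε : 0 < ε) (hε₂ : ε < 1 / 2)
  {F : EuclideanSpace ℝ (ι ⊕ ι) → ContactPoint (EuclideanSpace ℝ ι)}
include hε hε₂

theorem fderiv_mollify_x_apply_eq_zero
    {π π' : EuclideanSpace ℝ (ι ⊕ ι) →L[ℝ] EuclideanSpace ℝ ι} (hπ : ∀ q, ‖π q‖ ≤ ‖q‖)
    (hF : ∀ q, 1 ≤ ‖π q‖ → (F q).x = (profile (π' q)).x) {p v : EuclideanSpace ℝ (ι ⊕ ι)}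
    (hp : 2 ≤ ‖π p‖) (hv : π' v = 0) (i : ι) :
    fderiv ℝ (mollify ε fun q => (F q).x i) p v = 0 := by
  have hlocal : mollify ε (fun q => (F q).x i) =ᶠ[𝓝 p]
      mollify ε fun q => (profile (π' q)).x i :=
    mollify_eventuallyEq hε hε₂ fun q hq => by
      rw [hF q (by linarith [norm_map_sub_norm_sub_le hπ p q])]
  rw [hlocal.fderiv_eq]
  refine fderiv_mollify_apply_eq_zero hε
    ((contDiff_profile_x_apply i).continuous.comp π'.continuous) (fun q t => ?_) p
  simp [hv]

section Outside

variable (hF : ∀ p, 1 ≤ ‖p‖ → F p = doubleProfile p)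
include hF

theorem mollify_h_eq_zero {p : EuclideanSpace ℝ (ι ⊕ ι)} (hl : 2 ≤ ‖leftPart p‖)
    (hr : 2 ≤ ‖rightPart p‖) : mollify ε (fun q => (F q).h) p = 0 := by
  rw [mollify_congr hε (h' := fun _ => 0) fun q hq => ?_, mollify_const hε]
  have hql := norm_map_sub_norm_sub_le norm_leftPart_le p q
  have hqr := norm_map_sub_norm_sub_le norm_rightPart_le p q
  rw [hF q (by linarith [norm_leftPart_le q]), doubleProfile, profile_h_eq_zero (by linarith),
    profile_h_eq_zero (by linarith), add_zero]

theorem mollify_h_eq_mollify_doubleProfile_h {p : EuclideanSpace ℝ (ι ⊕ ι)} (hp : 2 ≤ ‖p‖) :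
    mollify ε (fun q => (F q).h) p = mollify ε (fun q => (doubleProfile q).h) p :=
  mollify_congr hε fun q hq => by
    rw [hF q (by linarith [norm_le_norm_add_norm_sub' p q, norm_sub_rev p q])]

theorem fderiv_mollify_x_eq_fderiv_mollify_doubleProfile_x {p : EuclideanSpace ℝ (ι ⊕ ι)}
    (hp : 2 ≤ ‖p‖) (i : ι) :
    fderiv ℝ (mollify ε fun q => (F q).x i) p =
      fderiv ℝ (mollify ε fun q => (doubleProfile q).x i) p :=
  (mollify_eventuallyEq hε hε₂ fun q hq => by
    rw [hF q (by linarith [norm_le_norm_add_norm_sub' p q, norm_sub_rev p q])]).fderiv_eq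

end Outside

variable [DecidableEq ι] (i₀ : ι)

theorem gradPair_mollify_x_apply_eq_zero
    {π π' : EuclideanSpace ℝ (ι ⊕ ι) →L[ℝ] EuclideanSpace ℝ ι} (hπ : ∀ q, ‖π q‖ ≤ ‖q‖)
    (hF : ∀ q, 1 ≤ ‖π q‖ → (F q).x = (profile (π' q)).x) (hdir : ‖π (diagDir i₀)‖ = 1) {s : ℝ}
    (hs : |s| ≤ 11) {p v : EuclideanSpace ℝ (ι ⊕ ι)} (hp : 28 ≤ ‖π p‖) (hv : π' v = 0)
    (k : ι ⊕ ι) :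
    gradPair (fun i => mollify ε fun q => (F q).x i) (diagDir i₀) s p k v = 0 := by
  have hshift : ‖π p‖ - |s| ≤ ‖π (p + s • diagDir i₀)‖ := by
    have hdist := norm_sub_norm_le (π p) (-(s • π (diagDir i₀)))
    rw [norm_neg, norm_smul, hdir, mul_one, sub_neg_eq_add] at hdist
    rwa [map_add, map_smul]
  rcases k with i | i
  · exact fderiv_mollify_x_apply_eq_zero hε hε₂ hπ hF (by linarith) hv i
  · exact fderiv_mollify_x_apply_eq_zero hε hε₂ hπ hF (by linarith) hv i

variable (hF : ∀ p, 1 ≤ ‖p‖ → F p = doubleProfile p)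
include hF

theorem vanishOnTwoAxes_gradPair_mollify_x [Nontrivial ι] {s : ℝ} (hs : |s| ≤ 11)
    {p : EuclideanSpace ℝ (ι ⊕ ι)} (hp : 40 < ‖p‖) :
    VanishOnTwoAxes (gradPair (fun i => mollify ε fun q => (F q).x i) (diagDir i₀) s p) := by
  obtain ⟨i₁, i₂, hne⟩ := exists_pair_ne ι
  have hfar : 28 ≤ ‖leftPart p‖ ∨ 28 ≤ ‖rightPart p‖ := by
    by_contra! hnear
    nlinarith [norm_leftPart_sq_add_norm_rightPart_sq p, norm_nonneg (leftPart p),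
      norm_nonneg (rightPart p)]
  rcases hfar with hfar | hfar
  · have hx : ∀ q, 1 ≤ ‖leftPart q‖ → (F q).x = (profile (rightPart q)).x := fun q hq => by
      rw [hF q (hq.trans (norm_leftPart_le q)), doubleProfile, profile_x_eq_zero (by linarith),
        zero_add]
    have haxis : ∀ i : ι, rightPart (EuclideanSpace.single (Sum.inl i) (1 : ℝ)) = 0 :=
      fun i => by ext j; simp
    have hzero := fun i => gradPair_mollify_x_apply_eq_zero hε hε₂ i₀ norm_leftPart_le hx
      (by simp [leftPart_diagDir]) hs hfar (haxis i)
    exact ⟨Sum.inl i₁, Sum.inl i₂, by simpa using hne, fun k => ⟨hzero i₁ k, hzero i₂ k⟩⟩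
  · have hx : ∀ q, 1 ≤ ‖rightPart q‖ → (F q).x = (profile (leftPart q)).x := fun q hq => by
      rw [hF q (hq.trans (norm_rightPart_le q)), doubleProfile,
        profile_x_eq_zero (a := rightPart q) (by linarith), add_zero]
    have haxis : ∀ i : ι, leftPart (EuclideanSpace.single (Sum.inr i) (1 : ℝ)) = 0 :=
      fun i => by ext j; simp
    have hzero := fun i => gradPair_mollify_x_apply_eq_zero hε hε₂ i₀ norm_rightPart_le hx
      (by simp [rightPart_diagDir]) hs hfar (haxis i)
    exact ⟨Sum.inr i₁, Sum.inr i₂, by simpa using hne, fun k => ⟨hzero i₁ k, hzero i₂ k⟩⟩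

omit hF hε hε₂

theorem two_le_norm_leftPart_and_rightPart_add_smul_diagDir {p : EuclideanSpace ℝ (ι ⊕ ι)}
    (hp : ‖p‖ < 2) {s : ℝ} (hs : 4 ≤ |s|) :
    2 ≤ ‖leftPart (p + s • diagDir i₀)‖ ∧ 2 ≤ ‖rightPart (p + s • diagDir i₀)‖ := by
  have hdir : ‖s • EuclideanSpace.single i₀ (1 : ℝ)‖ = |s| := by simp [norm_smul]
  have hdist (a : EuclideanSpace ℝ ι) : |s| - ‖a‖ ≤ ‖a + s • EuclideanSpace.single i₀ (1 : ℝ)‖ := by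
    rw [← hdir, add_comm]
    exact norm_sub_le_norm_add _ _
  simp only [map_add, map_smul, leftPart_diagDir, rightPart_diagDir]
  constructor
  · linarith [hdist (leftPart p), norm_leftPart_le p]
  · linarith [hdist (rightPart p), norm_rightPart_le p]

/-- The pairing density of the mollification at scale `ε` of a map into the Heisenberg group. -/
noncomputable def mollifiedPairing (ε : ℝ)
    (F : EuclideanSpace ℝ (ι ⊕ ι) → ContactPoint (EuclideanSpace ℝ ι))
    (w : EuclideanSpace ℝ (ι ⊕ ι)) (s : ℝ) (p : EuclideanSpace ℝ (ι ⊕ ι)) : ℝ :=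
  pairingDensity (fun i => mollify ε fun q => (F q).x i) (mollify ε fun q => (F q).h) w s p

include hε hε₂ hF

theorem mollifiedPairing_eq_zero [Nontrivial ι] {s : ℝ} (hs : |s| ≤ 11)
    {p : EuclideanSpace ℝ (ι ⊕ ι)} (hp : 40 < ‖p‖) : mollifiedPairing ε F (diagDir i₀) s p = 0 := by
  rw [mollifiedPairing, pairingDensity,
    (vanishOnTwoAxes_gradPair_mollify_x hε hε₂ i₀ hF hs hp).covectorDet_eq_zero, mul_zero]

theorem mollifiedPairing_eq_mollifiedPairing_doubleProfile (p : EuclideanSpace ℝ (ι ⊕ ι)) :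
    mollifiedPairing ε F (diagDir i₀) 10 p =
      mollifiedPairing ε doubleProfile (diagDir i₀) 10 p := by
  have hh {q} (hq : 2 ≤ ‖leftPart q‖ ∧ 2 ≤ ‖rightPart q‖) := mollify_h_eq_zero hε hε₂ hF hq.1 hq.2
  have hh' {q : EuclideanSpace ℝ (ι ⊕ ι)} (hq : 2 ≤ ‖leftPart q‖ ∧ 2 ≤ ‖rightPart q‖) :=
    mollify_h_eq_zero hε hε₂ (fun _ _ => rfl) hq.1 hq.2
  simp only [mollifiedPairing, pairingDensity, gradPair]
  rcases lt_or_ge ‖p‖ 2 with hp | hp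
  · have hfar := two_le_norm_leftPart_and_rightPart_add_smul_diagDir i₀ hp (s := 10) (by norm_num)
    rw [hh hfar, hh' hfar]
    simp only [zero_mul]
  rcases lt_or_ge ‖p + (10 : ℝ) • diagDir i₀‖ 2 with hp' | hp'
  · have hfar := two_le_norm_leftPart_and_rightPart_add_smul_diagDir i₀ hp' (s := -10)
      (by norm_num)
    rw [neg_smul, add_neg_cancel_right] at hfar
    rw [hh hfar, hh' hfar]
    simp only [zero_mul, mul_zero]
  · simp only [mollify_h_eq_mollify_doubleProfile_h hε hε₂ hF hp,
      mollify_h_eq_mollify_doubleProfile_h hε hε₂ hF hp',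
      fderiv_mollify_x_eq_fderiv_mollify_doubleProfile_x hε hε₂ hF hp,
      fderiv_mollify_x_eq_fderiv_mollify_doubleProfile_x hε hε₂ hF hp']

end Obstruction

section Limit

variable {ι : Type*} [Fintype ι] [DecidableEq ι]

theorem tendsto_pairingDensity_mollify {x : ι → EuclideanSpace ℝ (ι ⊕ ι) → ℝ}
    {ψ : EuclideanSpace ℝ (ι ⊕ ι) → ℝ} (hx : ∀ i, ContDiff ℝ 1 (x i)) (hψ : Continuous ψ)
    (w : EuclideanSpace ℝ (ι ⊕ ι)) (s : ℝ) (p : EuclideanSpace ℝ (ι ⊕ ι)) :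
    Filter.Tendsto (fun ε => pairingDensity (fun i => mollify ε (x i)) (mollify ε ψ) w s p)
      (𝓝[>] 0) (𝓝 (pairingDensity x ψ w s p)) := by
  refine ((tendsto_mollify hψ _).mul (tendsto_mollify hψ _)).mul
    (((covectorDet (ι ⊕ ι)).cont.tendsto _).comp (tendsto_pi_nhds.2 ?_))
  rintro (i | i) <;>
  exact tendsto_fderiv_mollify (hx i).continuous ((hx i).differentiable one_ne_zero _)

theorem continuous_mollifiedPairing {ε : ℝ} (hε : 0 < ε)
    {F : EuclideanSpace ℝ (ι ⊕ ι) → ContactPoint (EuclideanSpace ℝ ι)}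
    (hx : ∀ i, Continuous fun p => (F p).x i) (hh : Continuous fun p => (F p).h)
    (w : EuclideanSpace ℝ (ι ⊕ ι)) (s : ℝ) : Continuous (mollifiedPairing ε F w s) :=
  (continuous_pairingDensity w (fun i => contDiff_mollify hε (hx i) (n := 1))
    (differentiable_mollify hε hh).continuous).comp (Continuous.prodMk_right s)

theorem norm_mollifiedPairing_le {ε : ℝ} {A M : ℝ} (hM : 0 ≤ M)
    {F : EuclideanSpace ℝ (ι ⊕ ι) → ContactPoint (EuclideanSpace ℝ ι)}
    (hx : ∀ i p, ‖fderiv ℝ (mollify ε fun q => (F q).x i) p‖ ≤ A)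
    (hh : ∀ p, |mollify ε (fun q => (F q).h) p| ≤ M) (w : EuclideanSpace ℝ (ι ⊕ ι)) (s : ℝ)
    (p : EuclideanSpace ℝ (ι ⊕ ι)) :
    ‖mollifiedPairing ε F w s p‖ ≤
      M * M * (‖covectorDet (ι ⊕ ι)‖ * A ^ Fintype.card (ι ⊕ ι)) := by
  rw [mollifiedPairing, pairingDensity, norm_mul, norm_mul]
  refine mul_le_mul (mul_le_mul (hh _) (hh _) (norm_nonneg _) hM) (abs_covectorDet_le _ ?_)
    (norm_nonneg _) (by positivity)
  rintro (i | i)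
  · exact hx i _
  · exact hx i _

omit [DecidableEq ι] in
theorem exists_norm_fderiv_mollify_doubleProfile_x_le :
    ∃ A : ℝ, ∀ ε > 0, ∀ i (p : EuclideanSpace ℝ (ι ⊕ ι)),
      ‖fderiv ℝ (mollify ε fun q => (doubleProfile q).x i) p‖ ≤ A := by
  obtain ⟨C, hC, hx⟩ := exists_norm_doubleProfile_x_sub_le (ι := ι)
  refine ⟨kernelVariation (EuclideanSpace ℝ (ι ⊕ ι)) * C, fun ε hε i p => ?_⟩
  have hbound := norm_fderiv_mollify_le_of_abs_sub_le hε
    (contDiff_doubleProfile_x_apply i).continuous (p := p) (δ := C * ε) fun q hq =>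
      (PiLp.norm_apply_le ((doubleProfile q).x - (doubleProfile p).x) i).trans
        ((hx p q).trans (by gcongr))
  rwa [div_mul_eq_mul_div, ← mul_assoc, mul_div_cancel_right₀ _ hε.ne'] at hbound

theorem tendsto_integral_mollifiedPairing_doubleProfile [Nontrivial ι] (i₀ : ι) :
    Filter.Tendsto (fun ε => ∫ p, mollifiedPairing ε doubleProfile (diagDir i₀) 10 p) (𝓝[>] 0)
      (𝓝 (∫ p, pairingDensity (fun i p => (doubleProfile p).x i)
        (fun p : EuclideanSpace ℝ (ι ⊕ ι) => (doubleProfile p).h) (diagDir i₀) 10 p)) := by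
  obtain ⟨A, hA⟩ := exists_norm_fderiv_mollify_doubleProfile_x_le (ι := ι)
  obtain ⟨M, hM⟩ := exists_abs_doubleProfile_h_le (ι := ι)
  have hM₀ : 0 ≤ M := (abs_nonneg _).trans (hM 0)
  have hsmall : Ioo (0 : ℝ) (1 / 2) ∈ 𝓝[>] (0 : ℝ) := Ioo_mem_nhdsGT (by norm_num)
  refine tendsto_integral_filter_of_dominated_convergence
    (indicator (closedBall 0 40) fun _ => M * M *
      (‖covectorDet (ι ⊕ ι)‖ * A ^ Fintype.card (ι ⊕ ι))) ?_ ?_ ?_ ?_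
  · filter_upwards [hsmall] with ε hε
    exact (continuous_mollifiedPairing hε.1
      (fun i => (contDiff_doubleProfile_x_apply i).continuous) continuous_doubleProfile_h _
      _).aestronglyMeasurable
  · filter_upwards [hsmall] with ε hε
    refine Filter.Eventually.of_forall fun p => ?_
    by_cases hp : p ∈ closedBall (0 : EuclideanSpace ℝ (ι ⊕ ι)) 40
    · rw [indicator_of_mem hp]
      exact norm_mollifiedPairing_le hM₀ (hA ε hε.1)
        (fun p => abs_mollify_le hε.1 fun q _ => hM q) _ _ p
    · rw [indicator_of_notMem hp, mollifiedPairing_eq_zero hε.1 hε.2 i₀ (fun _ _ => rfl)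
        (by norm_num) (by simpa using hp), norm_zero]
  · exact (integrable_indicator_iff measurableSet_closedBall).2
      (integrableOn_const measure_closedBall_lt_top.ne)
  · exact Filter.Eventually.of_forall fun p => tendsto_pairingDensity_mollify
      contDiff_doubleProfile_x_apply continuous_doubleProfile_h _ _ p

end Limit

section Obstruction

theorem tendsto_rpow_pow_div_pow {γ : ℝ} {n : ℕ} (hγ : (n + 1 : ℝ) < γ * (n + 2)) :
    Filter.Tendsto (fun ε : ℝ => (ε ^ γ) ^ (n + 2) / ε ^ (n + 1)) (𝓝[>] 0) (𝓝 0) := by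
  have hlim : Filter.Tendsto (fun ε : ℝ => ε ^ (γ * (n + 2) - (n + 1))) (𝓝[>] 0) (𝓝 0) := by
    have hcont := Real.continuousAt_rpow_const 0 (γ * (n + 2) - (n + 1)) (Or.inr (by linarith))
    rw [ContinuousAt, Real.zero_rpow (by linarith)] at hcont
    exact hcont.mono_left nhdsWithin_le_nhds
  refine hlim.congr' ?_
  filter_upwards [self_mem_nhdsWithin] with ε (hε : 0 < ε)
  rw [Real.rpow_sub hε, Real.rpow_mul hε.le, ← Real.rpow_natCast, ← Real.rpow_natCast]
  push_cast
  rfl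

variable {ι : Type*} [Fintype ι]
  {F : EuclideanSpace ℝ (ι ⊕ ι) → ContactPoint (EuclideanSpace ℝ ι)}
  (hF : ∀ p, 1 ≤ ‖p‖ → F p = doubleProfile p)

include hF in
theorem exists_abs_h_le_of_eq_doubleProfile (hh : Continuous fun p => (F p).h) :
    ∃ M, ∀ p, |(F p).h| ≤ M := by
  obtain ⟨D, hD⟩ := exists_abs_doubleProfile_h_le (ι := ι)
  obtain ⟨M, hM⟩ := (isCompact_closedBall
    (0 : EuclideanSpace ℝ (ι ⊕ ι)) 1).exists_bound_of_continuousOn hh.continuousOn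
  refine ⟨max M D, fun p => ?_⟩
  rcases le_total ‖p‖ 1 with hp | hp
  · exact (hM p (by simpa using hp)).trans (le_max_left _ _)
  · rw [hF p hp]
    exact (hD p).trans (le_max_right _ _)

variable {C γ : ℝ} (hγ : 0 < γ)
  (hholder : ∀ p q, ‖q - p‖ ≤ 1 → ContactNear (C * ‖q - p‖ ^ γ) (F p) (F q))
include hγ hholder

theorem continuous_x_apply_of_contactNear (i : ι) : Continuous fun p => (F p).x i :=
  (EuclideanSpace.proj (𝕜 := ℝ) i).continuous.comp (continuous_x_of_contactNear hγ hholder)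

variable (hC : 0 ≤ C)
include hC

theorem contactNear_of_norm_sub_le {ε : ℝ} (hε₁ : ε ≤ 1) {p q : EuclideanSpace ℝ (ι ⊕ ι)}
    (hpq : ‖q - p‖ ≤ ε) : ContactNear (C * ε ^ γ) (F p) (F q) :=
  (hholder p q (hpq.trans hε₁)).mono (by gcongr)

variable {ε : ℝ} (hε : 0 < ε) (hε₁ : ε ≤ 1)
include hε hε₁

theorem norm_fderiv_mollify_x_le (i : ι) (p : EuclideanSpace ℝ (ι ⊕ ι)) :
    ‖fderiv ℝ (mollify ε fun q => (F q).x i) p‖ ≤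
      kernelVariation (EuclideanSpace ℝ (ι ⊕ ι)) / ε * (C * ε ^ γ) :=
  norm_fderiv_mollify_le_of_abs_sub_le hε (continuous_x_apply_of_contactNear hγ hholder i)
    fun q hq => (PiLp.norm_apply_le ((F q).x - (F p).x) i).trans
      (contactNear_of_norm_sub_le hγ hholder hC hε₁ hq).norm_x_sub_le

theorem norm_fderiv_mollify_h_sub_sum_le (p : EuclideanSpace ℝ (ι ⊕ ι)) :
    ‖fderiv ℝ (mollify ε fun q => (F q).h) p -
        ∑ i, (4 * (F p).y i) • fderiv ℝ (mollify ε fun q => (F q).x i) p‖ ≤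
      kernelVariation (EuclideanSpace ℝ (ι ⊕ ι)) / ε * (C * ε ^ γ) ^ 2 := by
  refine norm_fderiv_mollify_sub_sum_le hε (continuous_h_of_contactNear hγ hholder)
    (continuous_x_apply_of_contactNear hγ hholder) _ fun q hq => ?_
  convert (contactNear_of_norm_sub_le hγ hholder hC hε₁ hq).abs_contactDefect_le using 2
  simp only [contactDefect, PiLp.inner_apply, Finset.mul_sum]
  congr 1
  exact Finset.sum_congr rfl fun i _ => by simp; ring

omit hε hε₁

variable [DecidableEq ι] (i₀ : ι)
include hF

theorem exists_abs_integral_mollifiedPairing_doubleProfile_le [Nontrivial ι] :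
    ∃ B : ℝ, ∀ ε ∈ Ioo (0 : ℝ) (1 / 2),
      |∫ p, mollifiedPairing ε doubleProfile (diagDir i₀) 10 p| ≤
        B * ((ε ^ γ) ^ (Fintype.card (ι ⊕ ι) + 2) / ε ^ (Fintype.card (ι ⊕ ι) + 1)) := by
  have hxc := continuous_x_apply_of_contactNear hγ hholder
  have hhc := continuous_h_of_contactNear hγ hholder
  obtain ⟨M, hM⟩ := exists_abs_h_le_of_eq_doubleProfile hF hhc
  let K := kernelVariation (EuclideanSpace ℝ (ι ⊕ ι))
  let n := Fintype.card (ι ⊕ ι)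
  refine ⟨M * K * C ^ 2 * ‖diagDir i₀‖ * ‖covectorDet (ι ⊕ ι)‖ * (K * C) ^ n *
    (1 + 2 * Fintype.card ι) *
      (volume : Measure (EuclideanSpace ℝ (ι ⊕ ι))).real (closedBall 0 40) * 10,
    fun ε ⟨hε, hε₂⟩ => ?_⟩
  have hε₁ : ε ≤ 1 := by linarith
  have hbound := abs_integral_pairingDensity_sub_le (S := 10) (a := -1) (b := 11) (w := diagDir i₀)
    (fun i => contDiff_mollify hε (hxc i) (n := 3)) (contDiff_mollify hε hhc (n := 2))
    (by norm_num) (by norm_num) (by norm_num)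
    (fun s hs p hp => vanishOnTwoAxes_gradPair_mollify_x hε hε₂ i₀ hF
      (abs_le.2 ⟨by linarith [hs.1], hs.2.le⟩) hp)
    (norm_fderiv_mollify_x_le hγ hholder hC hε hε₁) (fun p => abs_mollify_le hε fun q _ => hM q)
    (norm_fderiv_mollify_h_sub_sum_le hγ hholder hC hε hε₁)
  have : Nonempty ι := ⟨i₀⟩
  simp only [pairingDensity_zero, integral_zero, sub_zero] at hbound
  simp_rw [← mollifiedPairing_eq_mollifiedPairing_doubleProfile hε hε₂ i₀ hF]
  refine hbound.trans_eq ?_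
  simp only [K, n, div_mul_eq_mul_div, div_pow]
  field_simp
  ring

omit hγ hholder [DecidableEq ι]

theorem not_contactNear_rpow_of_eq_doubleProfile [Nonempty ι] (hι : Even (Fintype.card ι))
    (hγ : (2 * Fintype.card ι + 1 : ℝ) < γ * (2 * Fintype.card ι + 2)) (hγ₁ : γ ≤ 1) :
    ¬ ∀ p q, ‖p‖ ≤ 1 → ‖q‖ ≤ 1 → ContactNear (C * ‖q - p‖ ^ γ) (F p) (F q) := by
  intro hin
  have hγ₀ : 0 < γ := by
    by_contra! hneg
    nlinarith [(Fintype.card ι).cast_nonneg (α := ℝ)]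
  have hcard : 1 < Fintype.card ι := by
    obtain ⟨r, hr⟩ := hι
    have hpos := Fintype.card_pos (α := ι)
    omega
  have : Nontrivial ι := Fintype.one_lt_card_iff_nontrivial.1 hcard
  classical
  obtain ⟨i₀⟩ := ‹Nonempty ι›
  obtain ⟨D, hD, hout⟩ := exists_contactNear_doubleProfile (ι := ι)
  have hholder : ∀ p q, ‖q - p‖ ≤ 1 → ContactNear (4 * (C + D) * ‖q - p‖ ^ γ) (F p) (F q) :=
    fun p q hpq => contactNear_of_inside_of_outside hC hD hγ₀ hγ₁ hin
      (fun p q hp hq => by rw [hF p hp, hF q hq]; exact hout p q hp) hpq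
  obtain ⟨B, hB⟩ := exists_abs_integral_mollifiedPairing_doubleProfile_le hF hγ₀ hholder
    (by positivity) i₀
  have hrate : Filter.Tendsto (fun ε : ℝ => B * ((ε ^ γ) ^ (Fintype.card (ι ⊕ ι) + 2) /
      ε ^ (Fintype.card (ι ⊕ ι) + 1))) (𝓝[>] 0) (𝓝 0) := by
    have hpow := tendsto_rpow_pow_div_pow (γ := γ) (n := Fintype.card (ι ⊕ ι))
      (by rw [Fintype.card_sum]; push_cast; linarith)
    simpa using hpow.const_mul B
  have hzero := squeeze_zero_norm' (Filter.eventually_of_mem (Ioo_mem_nhdsGT one_half_pos)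
    fun ε hε => (Real.norm_eq_abs _).trans_le (hB ε hε)) hrate
  exact (integral_pairingDensity_doubleProfile_pos hι i₀).ne
    (tendsto_nhds_unique hzero (tendsto_integral_mollifiedPairing_doubleProfile i₀))

end Obstruction

/-! ### The Heisenberg group -/

section Heisenberg

open scoped InnerProductSpace

variable {N : ℕ}

theorem sum_castSucc_eq_sum_xI_add_yI (φ : Fin (2 * N + 1) → ℝ) :
    ∑ i : Fin (2 * N), φ (Fin.castSucc i) = ∑ j : Fin N, (φ (xI N j) + φ (yI N j)) := by
  rw [← Equiv.sum_comp (finProdFinEquiv.trans (finCongr (mul_comm N 2))), Fintype.sum_prod_type]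
  refine Finset.sum_congr rfl fun j _ => ?_
  rw [Fin.sum_univ_two]
  congr 2 <;> ext <;> simp [xI, yI, finProdFinEquiv]
  omega

/-- The point `(x, y, t)` of the Heisenberg group `ℍ^N` in the contact coordinates
`(x, y, t + 2 ⟪x, y⟫)`. -/
noncomputable def toContactPoint (p : EuclideanSpace ℝ (Fin (2 * N + 1))) :
    ContactPoint (EuclideanSpace ℝ (Fin N)) where
  x := WithLp.toLp 2 fun j => p (xI N j)
  y := WithLp.toLp 2 fun j => p (yI N j)
  h := p (tI N) + 2 * ∑ j, p (xI N j) * p (yI N j)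

/-- The point of the Heisenberg group `ℍ^N` with given contact coordinates. -/
noncomputable def ofContactPoint (P : ContactPoint (EuclideanSpace ℝ (Fin N))) :
    EuclideanSpace ℝ (Fin (2 * N + 1)) :=
  WithLp.toLp 2 fun k =>
    if h : k.1 < 2 * N then
      if k.1 % 2 = 0 then P.x ⟨k.1 / 2, by omega⟩ else P.y ⟨k.1 / 2, by omega⟩
    else P.h - 2 * ∑ j, P.x j * P.y j

theorem ofContactPoint_xI (P : ContactPoint (EuclideanSpace ℝ (Fin N))) (j : Fin N) :
    ofContactPoint P (xI N j) = P.x j := by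
  simp [ofContactPoint, xI]

theorem ofContactPoint_yI (P : ContactPoint (EuclideanSpace ℝ (Fin N))) (j : Fin N) :
    ofContactPoint P (yI N j) = P.y j := by
  have hj : 2 * j.1 + 1 < 2 * N := by omega
  have hdiv : (2 * j.1 + 1) / 2 = j.1 := by omega
  simp [ofContactPoint, yI, hj, hdiv]

theorem ofContactPoint_tI (P : ContactPoint (EuclideanSpace ℝ (Fin N))) :
    ofContactPoint P (tI N) = P.h - 2 * ∑ j, P.x j * P.y j := by
  simp [ofContactPoint, tI]

theorem toContactPoint_ofContactPoint (P : ContactPoint (EuclideanSpace ℝ (Fin N))) :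
    toContactPoint (ofContactPoint P) = P := by
  simp [toContactPoint, ofContactPoint_xI, ofContactPoint_yI, ofContactPoint_tI]

variable {p q : EuclideanSpace ℝ (Fin (2 * N + 1))} {r : ℝ}

/-- The vertical component of `q⁻¹ * p` in the Heisenberg group. -/
noncomputable def verticalGap (p q : EuclideanSpace ℝ (Fin (2 * N + 1))) : ℝ :=
  p (tI N) - q (tI N) + 2 * ∑ j : Fin N, (q (xI N j) * p (yI N j) - p (xI N j) * q (yI N j))

theorem contactDefect_toContactPoint (p q : EuclideanSpace ℝ (Fin (2 * N + 1))) :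
    contactDefect (toContactPoint p) (toContactPoint q) = -verticalGap p q +
      2 * ⟪(toContactPoint q).x - (toContactPoint p).x,
        (toContactPoint q).y - (toContactPoint p).y⟫_ℝ := by
  have hexpand : ∀ j, (q (xI N j) - p (xI N j)) * (q (yI N j) - p (yI N j)) =
      q (xI N j) * q (yI N j) - p (xI N j) * p (yI N j) +
      (q (xI N j) * p (yI N j) - p (xI N j) * q (yI N j)) -
      2 * ((q (xI N j) - p (xI N j)) * p (yI N j)) := fun j => by ring
  simp only [contactDefect, toContactPoint, verticalGap, PiLp.inner_apply, PiLp.sub_apply,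
    RCLike.inner_apply, conj_trivial, mul_comm (q (yI N _) - p (yI N _)), hexpand,
    Finset.sum_sub_distrib, Finset.sum_add_distrib, ← Finset.mul_sum]
  ring

theorem dK_nonneg (p q : EuclideanSpace ℝ (Fin (2 * N + 1))) : 0 ≤ dK N p q := by
  rw [dK]
  positivity

theorem dK_pow_four (p q : EuclideanSpace ℝ (Fin (2 * N + 1))) :
    dK N p q ^ 4 = (‖(toContactPoint q).x - (toContactPoint p).x‖ ^ 2 +
      ‖(toContactPoint q).y - (toContactPoint p).y‖ ^ 2) ^ 2 + verticalGap p q ^ 2 := by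
  have hsum : ∑ i : Fin (2 * N), (p (Fin.castSucc i) - q (Fin.castSucc i)) ^ 2 =
      ‖(toContactPoint q).x - (toContactPoint p).x‖ ^ 2 +
        ‖(toContactPoint q).y - (toContactPoint p).y‖ ^ 2 := by
    rw [sum_castSucc_eq_sum_xI_add_yI fun i => (p i - q i) ^ 2, Finset.sum_add_distrib,
      EuclideanSpace.real_norm_sq_eq, EuclideanSpace.real_norm_sq_eq]
    simp only [toContactPoint, PiLp.sub_apply, sub_sq_comm]
  rw [dK, hsum, ← Real.rpow_natCast, ← Real.rpow_mul (by positivity), verticalGap]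
  norm_num

theorem contactNear_of_dK_le (h : dK N p q ≤ r) :
    ContactNear (2 * r) (toContactPoint p) (toContactPoint q) := by
  have hr : 0 ≤ r := (dK_nonneg p q).trans h
  have hpow := pow_le_pow_left₀ (dK_nonneg p q) h 4
  rw [dK_pow_four] at hpow
  set Δx := (toContactPoint q).x - (toContactPoint p).x
  set Δy := (toContactPoint q).y - (toContactPoint p).y
  have hhorizontal : ‖Δx‖ ^ 2 + ‖Δy‖ ^ 2 ≤ r ^ 2 :=
    le_of_sq_le_sq (by nlinarith [sq_nonneg (verticalGap p q)]) (by positivity)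
  have hvertical : |verticalGap p q| ≤ r ^ 2 :=
    abs_le_of_sq_le_sq (by nlinarith [sq_nonneg (‖Δx‖ ^ 2 + ‖Δy‖ ^ 2)]) (by positivity)
  have hΔx : ‖Δx‖ ≤ r := le_of_sq_le_sq (by linarith [sq_nonneg ‖Δy‖]) hr
  have hΔy : ‖Δy‖ ≤ r := le_of_sq_le_sq (by linarith [sq_nonneg ‖Δx‖]) hr
  have hinner : |⟪Δx, Δy⟫_ℝ| ≤ r * r := (abs_real_inner_le_norm _ _).trans (by gcongr)
  refine ⟨by linarith, by linarith, ?_⟩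
  rw [contactDefect_toContactPoint, abs_le]
  constructor <;> nlinarith [abs_le.1 hvertical, abs_le.1 hinner]

theorem dK_le_of_contactNear (h : ContactNear r (toContactPoint p) (toContactPoint q)) :
    dK N p q ≤ 2 * r := by
  have hr := h.nonneg
  obtain ⟨hΔx, hΔy, hdefect⟩ := h
  rw [contactDefect_toContactPoint] at hdefect
  refine le_of_pow_le_pow_left₀ four_ne_zero (by positivity) ?_
  rw [dK_pow_four]
  set Δx := (toContactPoint q).x - (toContactPoint p).x
  set Δy := (toContactPoint q).y - (toContactPoint p).y
  have hinner : |⟪Δx, Δy⟫_ℝ| ≤ r * r := (abs_real_inner_le_norm _ _).trans (by gcongr)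
  have hvertical : |verticalGap p q| ≤ 3 * r ^ 2 := by
    rw [abs_le] at hdefect hinner ⊢
    constructor <;> nlinarith
  calc (‖Δx‖ ^ 2 + ‖Δy‖ ^ 2) ^ 2 + verticalGap p q ^ 2
      ≤ (r ^ 2 + r ^ 2) ^ 2 + (3 * r ^ 2) ^ 2 := by
        rw [← sq_abs (verticalGap p q)]
        gcongr
    _ ≤ (2 * r) ^ 4 := by nlinarith [sq_nonneg (r ^ 2)]

/-- The map from `ℝ^N × ℝ^N` to `ℍ^N` whose restriction to the unit sphere has no Hölder extension
to the ball. -/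
noncomputable def heisProfile (N : ℕ) (p : EuclideanSpace ℝ (Fin N ⊕ Fin N)) :
    EuclideanSpace ℝ (Fin (2 * N + 1)) :=
  ofContactPoint (doubleProfile p)

theorem exists_dK_heisProfile_le (N : ℕ) : ∃ L : ℝ, ∀ p q : EuclideanSpace ℝ (Fin N ⊕ Fin N),
    1 ≤ ‖p‖ → dK N (heisProfile N p) (heisProfile N q) ≤ L * ‖q - p‖ := by
  obtain ⟨C, -, hC⟩ := exists_contactNear_doubleProfile (ι := Fin N)
  refine ⟨2 * C, fun p q hp => ?_⟩
  rw [mul_assoc]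
  apply dK_le_of_contactNear
  simpa only [heisProfile, toContactPoint_ofContactPoint] using hC p q hp

theorem not_exists_holder_extension_heisProfile (hN : 1 ≤ N) (hE : Even N) {γ : ℝ}
    (hγ : (2 * N + 1 : ℝ) < γ * (2 * N + 2)) (hγ₁ : γ ≤ 1) :
    ¬ ∃ F : EuclideanSpace ℝ (Fin N ⊕ Fin N) → EuclideanSpace ℝ (Fin (2 * N + 1)),
      (∀ p, ‖p‖ = 1 → F p = heisProfile N p) ∧
      ∃ C : ℝ, ∀ p q, ‖p‖ ≤ 1 → ‖q‖ ≤ 1 → dK N (F p) (F q) ≤ C * ‖q - p‖ ^ γ := by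
  classical
  rintro ⟨F, hF, C, hC⟩
  have : Nonempty (Fin N) := ⟨⟨0, hN⟩⟩
  let G : EuclideanSpace ℝ (Fin N ⊕ Fin N) → ContactPoint (EuclideanSpace ℝ (Fin N)) :=
    (closedBall 0 1).piecewise (fun p => toContactPoint (F p)) doubleProfile
  have hin : ∀ p, ‖p‖ ≤ 1 → G p = toContactPoint (F p) := fun p hp =>
    piecewise_eq_of_mem _ _ _ (mem_closedBall_zero_iff.2 hp)
  have hout : ∀ p, 1 ≤ ‖p‖ → G p = doubleProfile p := by
    intro p hp
    rcases hp.eq_or_lt with hp | hp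
    · rw [hin p hp.ge, hF p hp.symm, heisProfile, toContactPoint_ofContactPoint]
    · exact piecewise_eq_of_notMem _ _ _ (by simpa using hp)
  refine not_contactNear_rpow_of_eq_doubleProfile hout (C := 2 * |C|) (by positivity)
    (by simpa using hE) (by simpa using hγ) hγ₁ fun p q hp hq => ?_
  rw [hin p hp, hin q hq, mul_assoc]
  exact contactNear_of_dK_le ((hC p q hp hq).trans (by gcongr; exact le_abs_self C))

/-- Coordinates identifying `ℝ^{4n}` with `ℝ^{2n} × ℝ^{2n}`. -/
noncomputable def splitIsometry (n : ℕ) : EuclideanSpace ℝ (Fin (4 * n)) ≃ₗᵢ[ℝ]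
    EuclideanSpace ℝ (Fin (2 * n) ⊕ Fin (2 * n)) :=
  LinearIsometryEquiv.piLpCongrLeft 2 ℝ ℝ
    ((finCongr (by omega : 4 * n = 2 * n + 2 * n)).trans finSumFinEquiv.symm)

end Heisenberg

/-- For `γ ∈ ((4n+1)/(4n+2), 1]` the Hölder homotopy group
`π_{4n-1}^γ(ℍ^{2n})` is nontrivial: there is a map `f : S^{4n-1} → ℝ^{4n+1}` which is
Lipschitz into `ℍ^{2n}` but admits no `γ`-Hölder (into `ℍ^{2n}`) extension
`F : B̄^{4n} → ℝ^{4n+1}`. -/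
theorem stmt4 (n : ℕ) (hn : 1 ≤ n) (γ : ℝ)
    (hγ1 : (4*(n:ℝ)+1)/(4*(n:ℝ)+2) < γ) (hγ2 : γ ≤ 1) :
    ∃ f : EuclideanSpace ℝ (Fin (4*n)) → EuclideanSpace ℝ (Fin (2*(2*n)+1)),
      (∃ L : ℝ, ∀ x ∈ sphere (0 : EuclideanSpace ℝ (Fin (4*n))) 1,
          ∀ y ∈ sphere (0 : EuclideanSpace ℝ (Fin (4*n))) 1,
          dK (2*n) (f x) (f y) ≤ L * dist x y) ∧
      ¬ ∃ F : EuclideanSpace ℝ (Fin (4*n)) → EuclideanSpace ℝ (Fin (2*(2*n)+1)),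
          (∀ x ∈ sphere (0 : EuclideanSpace ℝ (Fin (4*n))) 1, F x = f x) ∧
          ∃ C : ℝ, ∀ x ∈ closedBall (0 : EuclideanSpace ℝ (Fin (4*n))) 1,
              ∀ y ∈ closedBall (0 : EuclideanSpace ℝ (Fin (4*n))) 1,
              dK (2*n) (F x) (F y) ≤ C * dist x y ^ γ := by
  refine ⟨fun x => heisProfile (2*n) (splitIsometry n x), ?_, ?_⟩
  · obtain ⟨L, hL⟩ := exists_dK_heisProfile_le (2*n)
    refine ⟨L, fun x hx y _ => ?_⟩
    have hx₁ : 1 ≤ ‖splitIsometry n x‖ := by simpa using (mem_sphere_zero_iff_norm.1 hx).ge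
    simpa [← dist_eq_norm_sub'] using hL _ (splitIsometry n y) hx₁
  · rintro ⟨F, hF, C, hC⟩
    have hγ : (2 * (2 * n : ℕ) + 1 : ℝ) < γ * (2 * (2 * n : ℕ) + 2) := by
      rw [div_lt_iff₀ (by positivity)] at hγ1
      push_cast
      linarith
    refine not_exists_holder_extension_heisProfile (N := 2*n) (by omega) (even_two_mul n) hγ hγ2
      ⟨fun p => F ((splitIsometry n).symm p), fun p hp => ?_, C, fun p q hp hq => ?_⟩
    · simpa using hF ((splitIsometry n).symm p) (by simpa using hp)
    · simpa [← dist_eq_norm_sub'] using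
        hC ((splitIsometry n).symm p) (by simpa using hp)
          ((splitIsometry n).symm q) (by simpa using hq)
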